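/- arXiv:1602.00344 — 2 statements merged into one kernel-verified Lean document; each statement's English description precedes it below -/
import Mathlib

section
/- Let X ⊂ ℤ^d be a finite set of nonzero integer vectors. Then M_0(X) ≤ ⌊2d·log(2√d·‖X‖_∞)⌋. -/
/-! The argument is an entropy estimate. Take a representation `b = ∑ λ i • x i` whose support `T`
has the least possible size `n`. Two different subsets of `T` cannot have the same sum of `x i`:
otherwise one could shift weight in `λ` from one subset to the other until some coefficient
vanishes (`subset_sums_injOn`). So the `2 ^ n` subset sums are distinct points of `ℤ ^ d`.

They are also concentrated: their mean square distance to their barycentre `μ` is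
`∑ i ∈ T, ‖x i‖² / 4 ≤ n d M² / 4` with `M = ‖X‖_∞` (`sum_sq_centered`). Distinct lattice points
cannot be this concentrated if there are too many of them. Indeed, by `1 + y ≤ exp y`, the sum of
the Gaussian weights `exp (-s ‖p - μ‖²)` over the `2 ^ n` points is at least
`2 ^ n exp (-s n d M² / 4)`, whereas over the whole of `ℤ ^ d` it factors into one-dimensional
Gaussian sums, each at most `(17 / 15) √(π / s)` by Poisson summation (`gaussian_tsum_le`). With
`s = 2 / (n M²)` this yields `2 ^ n ≤ (exp (1 / 2) · (17 / 15) · √(π n M² / 2)) ^ d`, and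
`log y ≤ y - 1` at a multiple of `n / d` turns it into `n ≤ 2 d log₂ (2 √d M)`. -/

open Matrix

/-- The integer conic hull (semigroup) generated by the vectors `x i`. -/
def SgV {ι : Type*} [Fintype ι] {d : ℕ} (x : ι → Fin d → ℤ) : Set (Fin d → ℤ) :=
  { b | ∃ lam : ι → ℕ, ∑ i, (lam i : ℤ) • x i = b }

/-- `m0V x b` is the least number of nonzero coefficients in a representation
of `b` as a nonnegative integer combination of the `x i`. -/
noncomputable def m0V {ι : Type*} [Fintype ι] {d : ℕ} (x : ι → Fin d → ℤ)
    (b : Fin d → ℤ) : ℕ :=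
  sInf { k | ∃ lam : ι → ℕ, (∑ i, (lam i : ℤ) • x i = b) ∧
    k = (Finset.univ.filter fun i => lam i ≠ 0).card }

/-- `H ∈ HeightSet x` iff `H = g⁻¹ √(det (Vᵀ V))` for a matrix `V` formed by
`r(X)` linearly independent columns of `W(X)` (whose rows are the `x i`), where
`g` is the gcd of the determinants of all `r × r` submatrices of `V`.  This is
the determinant `H(X)` of the lattice `Λ(X)`. -/
noncomputable def HeightSet {ι : Type*} [Fintype ι] [DecidableEq ι] {d : ℕ}
    (x : ι → Fin d → ℤ) : Set ℝ :=
  { H | ∃ (r : ℕ) (c : Fin r → Fin d),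
      r = ((Matrix.of x).map ((↑) : ℤ → ℚ)).rank ∧
      LinearIndependent ℚ (fun k : Fin r => fun i : ι => (x i (c k) : ℚ)) ∧
      H = Real.sqrt (((Matrix.of fun i k => x i (c k) : Matrix ι (Fin r) ℤ)ᵀ *
              (Matrix.of fun i k => x i (c k) : Matrix ι (Fin r) ℤ)).det : ℝ) /
          ((Finset.univ.gcd fun ρ : Fin r ↪ ι =>
              (Matrix.of fun (i k : Fin r) => x (ρ i) (c k) : Matrix (Fin r) (Fin r) ℤ).det) : ℝ) }

/-! ### Second moment of the subset sums -/

open Finset in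
/-- The variance of a random subset sum, multiplied by the number of subsets. -/
lemma sum_sq_centered {ι : Type*} [DecidableEq ι] (a : ι → ℝ) (T : Finset ι) :
    ∑ S ∈ T.powerset, (∑ i ∈ S, a i - (∑ i ∈ T, a i) / 2) ^ 2
      = 2 ^ T.card * ((∑ i ∈ T, a i ^ 2) / 4) := by
  induction T using Finset.induction_on with
  | empty => simp
  | insert i T hi ih =>
    rw [sum_powerset_insert hi, ← sum_add_distrib, sum_insert hi, sum_insert hi,
      card_insert_of_notMem hi]
    have h : ∀ S ∈ T.powerset,
        (∑ j ∈ S, a j - (a i + ∑ j ∈ T, a j) / 2) ^ 2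
          + (∑ j ∈ insert i S, a j - (a i + ∑ j ∈ T, a j) / 2) ^ 2
        = 2 * (∑ j ∈ S, a j - (∑ j ∈ T, a j) / 2) ^ 2 + a i ^ 2 / 2 := by
      intro S hS
      rw [sum_insert (fun h => hi (mem_powerset.1 hS h))]
      ring
    rw [sum_congr rfl h, sum_add_distrib, ← mul_sum, ih, sum_const, card_powerset, nsmul_eq_mul]
    push_cast
    ring

/-! ### Gaussian weights of lattice points -/

/-- A Gaussian sum over `ℤ` with arbitrary centre is not much larger than the corresponding
integral `√a`, as long as the Gaussian is not too peaked. -/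
lemma gaussian_tsum_le {a : ℝ} (ha : Real.pi / 2 ≤ a) (μ : ℝ) :
    Summable (fun k : ℤ => Real.exp (-Real.pi / a * ((k : ℝ) - μ) ^ 2)) ∧
    ∑' k : ℤ, Real.exp (-Real.pi / a * ((k : ℝ) - μ) ^ 2) ≤ Real.sqrt a * (17 / 15) := by
  have hpi := Real.pi_gt_three
  have ha0 : 0 < a := by linarith
  have hac : (a : ℂ) ≠ 0 := by exact_mod_cast ha0.ne'
  constructor
  · -- up to a constant factor the terms are the norms of the terms of a two-variable theta series
    have h := ((summable_jacobiTheta₂_term_iff (-Complex.I * ((μ / a : ℝ) : ℂ))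
      (Complex.I * ((1 / a : ℝ) : ℂ))).2 (by simpa using ha0)).norm.mul_left
        (Real.exp (-Real.pi / a * μ ^ 2))
    refine h.congr fun k => ?_
    rw [norm_jacobiTheta₂_term, ← Real.exp_add]
    congr 1
    simp only [Complex.mul_im, Complex.neg_re, Complex.neg_im, Complex.I_re, Complex.I_im,
      Complex.ofReal_re, Complex.ofReal_im]
    field_simp
    ring
  · have key := Complex.tsum_exp_neg_quadratic (a := (a : ℂ)) (by simpa using ha0) (Complex.I * μ)
    have hR : ∀ k : ℤ, Complex.exp (-↑Real.pi / (a : ℂ) * (↑k + Complex.I * (Complex.I * μ)) ^ 2)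
        = ((Real.exp (-Real.pi / a * ((k : ℝ) - μ) ^ 2) : ℝ) : ℂ) := by
      intro k
      push_cast
      rw [← mul_assoc, Complex.I_mul_I]
      ring_nf
    simp_rw [hR] at key
    rw [← Complex.ofReal_tsum] at key
    have hsum : Summable (fun k : ℤ => Real.exp (-Real.pi * a * (k : ℝ) ^ 2)) := by
      have h := ((summable_jacobiTheta₂_term_iff 0 (Complex.I * (a : ℂ))).2
        (by simpa using ha0)).norm
      refine h.congr fun k => ?_
      rw [norm_jacobiTheta₂_term]
      simp
      ring
    have hnorm : ∀ k : ℤ, ‖Complex.exp (-↑Real.pi * (a : ℂ) * ↑k ^ 2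
        + 2 * ↑Real.pi * (Complex.I * μ) * ↑k)‖ = Real.exp (-Real.pi * a * (k : ℝ) ^ 2) := by
      intro k
      rw [Complex.norm_exp]
      congr 1
      have : (-↑Real.pi * (a : ℂ) * ↑k ^ 2 + 2 * ↑Real.pi * (Complex.I * μ) * ↑k)
          = ((-Real.pi * a * (k : ℝ) ^ 2 : ℝ) : ℂ)
            + ((2 * Real.pi * μ * k : ℝ) : ℂ) * Complex.I := by
        push_cast; ring
      rw [this, Complex.add_re, Complex.ofReal_re, Complex.re_ofReal_mul, Complex.I_re]
      ring
    have hle := norm_tsum_le_tsum_norm (f := fun k : ℤ => Complex.exp (-↑Real.pi * (a : ℂ) * ↑k ^ 2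
        + 2 * ↑Real.pi * (Complex.I * μ) * ↑k)) (by simp_rw [hnorm]; exact hsum)
    simp_rw [hnorm] at hle
    rw [key] at hle
    have hθ : jacobiTheta (Complex.I * a)
        = ((∑' k : ℤ, Real.exp (-Real.pi * a * (k : ℝ) ^ 2) : ℝ) : ℂ) := by
      rw [jacobiTheta, Complex.ofReal_tsum]
      refine tsum_congr fun k => ?_
      push_cast
      congr 1
      linear_combination (↑Real.pi * (k : ℂ) ^ 2 * a) * Complex.I_mul_I
    have hb := norm_jacobiTheta_sub_one_le (τ := Complex.I * a) (by simpa using ha0)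
    have him : (Complex.I * (a : ℂ)).im = a := by simp
    rw [hθ, him, ← Complex.ofReal_one, ← Complex.ofReal_sub, Complex.norm_real] at hb
    have hq : Real.exp (-Real.pi * a) ≤ 1 / 16 := by
      have h1 : Real.exp (-Real.pi * a) ≤ Real.exp (-4) := by
        apply Real.exp_le_exp.2; nlinarith
      have h2 : Real.exp (-4) = (Real.exp (-1)) ^ 4 := by
        rw [← Real.exp_nat_mul]; norm_num
      have h3 : Real.exp (-1) ≤ 1 / 2 := by
        have := Real.exp_neg_one_lt_d9; linarith
      calc _ ≤ _ := h1
        _ = _ := h2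
        _ ≤ (1 / 2 : ℝ) ^ 4 := by gcongr
        _ = _ := by norm_num
    have hq0 := Real.exp_pos (-Real.pi * a)
    have hB : 2 / (1 - Real.exp (-Real.pi * a)) * Real.exp (-Real.pi * a) ≤ 2 / 15 := by
      rw [div_mul_eq_mul_div, div_le_iff₀ (by linarith)]
      linarith
    have hΘ : ∑' k : ℤ, Real.exp (-Real.pi * a * (k : ℝ) ^ 2) ≤ 17 / 15 := by
      have := (Real.le_norm_self _).trans (hb.trans hB)
      linarith
    have hroot : (1 / (a : ℂ) ^ (1 / 2 : ℂ)) = ((1 / Real.sqrt a : ℝ) : ℂ) := by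
      rw [Real.sqrt_eq_rpow]
      push_cast
      rw [Complex.ofReal_cpow ha0.le]
      norm_num
    rw [hroot, ← Complex.ofReal_mul, Complex.norm_real] at hle
    have h := (Real.le_norm_self _).trans (hle.trans hΘ)
    rw [one_div, inv_mul_le_iff₀ (Real.sqrt_pos.2 ha0)] at h
    exact h

open Finset in
/-- A finite set of lattice points has Gaussian weight at most that of the whole lattice, which is
a product of one-dimensional Gaussian sums. -/
lemma gaussian_sum_lattice_le {d : ℕ} {a : ℝ} (ha : Real.pi / 2 ≤ a) (μ : Fin d → ℝ)
    (P : Finset (Fin d → ℤ)) :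
    ∑ p ∈ P, Real.exp (-Real.pi / a * ∑ j, ((p j : ℝ) - μ j) ^ 2)
      ≤ (Real.sqrt a * (17 / 15)) ^ d := by
  classical
  have hsub : P ⊆ Fintype.piFinset (fun j => P.image (fun p : Fin d → ℤ => p j)) := by
    intro p hp
    rw [Fintype.mem_piFinset]
    exact fun j => mem_image_of_mem _ hp
  calc ∑ p ∈ P, Real.exp (-Real.pi / a * ∑ j, ((p j : ℝ) - μ j) ^ 2)
      ≤ ∑ p ∈ Fintype.piFinset (fun j => P.image (fun p : Fin d → ℤ => p j)),
          Real.exp (-Real.pi / a * ∑ j, ((p j : ℝ) - μ j) ^ 2) :=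
        sum_le_sum_of_subset_of_nonneg hsub fun _ _ _ => (Real.exp_pos _).le
    _ = ∏ j, ∑ k ∈ P.image (fun p : Fin d → ℤ => p j), Real.exp (-Real.pi / a * ((k : ℝ) - μ j) ^ 2) := by
        rw [prod_univ_sum]
        refine sum_congr rfl fun p _ => ?_
        rw [mul_sum, Real.exp_sum]
    _ ≤ ∏ _j : Fin d, (Real.sqrt a * (17 / 15)) := by
        refine prod_le_prod (fun j _ => sum_nonneg fun _ _ => (Real.exp_pos _).le) fun j _ => ?_
        obtain ⟨h1, h2⟩ := gaussian_tsum_le ha (μ j)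
        exact (h1.sum_le_tsum _ fun _ _ => (Real.exp_pos _).le).trans h2
    _ = _ := by simp

/-! ### Bounding the number of vectors with distinct subset sums -/

open Finset in
/-- If all subset sums of `n` integer vectors with entries bounded by `M` are distinct, then `n` is
bounded by the Gaussian estimate with `s = 2 / (n M²)`. -/
lemma two_pow_le {d : ℕ} {ι : Type*} [DecidableEq ι] (x : ι → Fin d → ℤ) (T : Finset ι) (M : ℕ)
    (hM : 1 ≤ M) (hT : T.Nonempty) (hx : ∀ i j, (x i j).natAbs ≤ M)
    (hinj : Set.InjOn (fun S => ∑ i ∈ S, x i) (T.powerset : Set (Finset ι))) :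
    (2 : ℝ) ^ T.card
      ≤ (Real.exp (1 / 2) * (Real.sqrt (Real.pi * T.card * M ^ 2 / 2) * (17 / 15))) ^ d := by
  set n := T.card with hn
  have hn1 : (1 : ℝ) ≤ n := by exact_mod_cast hT.card_pos
  have hM1 : (1 : ℝ) ≤ M := by exact_mod_cast hM
  have hpi := Real.pi_pos
  set a : ℝ := Real.pi * n * M ^ 2 / 2 with ha_def
  have hnM : (1 : ℝ) ≤ n * M ^ 2 := one_le_mul_of_one_le_of_one_le hn1 (one_le_pow₀ hM1)
  have ha : Real.pi / 2 ≤ a := by rw [ha_def]; nlinarith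
  set μ : Fin d → ℝ := fun j => (∑ i ∈ T, (x i j : ℝ)) / 2 with hμ
  set Q : Finset ι → ℝ := fun S => ∑ j, (∑ i ∈ S, (x i j : ℝ) - μ j) ^ 2 with hQ
  have hs : Real.pi / a = 2 / (n * M ^ 2) := by
    rw [ha_def]; field_simp
  have hQsum : ∑ S ∈ T.powerset, Q S ≤ 2 ^ n * (d * (n * M ^ 2 / 4)) := by
    rw [hQ, sum_comm]
    calc _ = ∑ j, 2 ^ n * ((∑ i ∈ T, (x i j : ℝ) ^ 2) / 4) :=
          sum_congr rfl fun j _ => sum_sq_centered (fun i => (x i j : ℝ)) T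
      _ ≤ ∑ j : Fin d, (2 : ℝ) ^ n * (n * M ^ 2 / 4) := by
          refine sum_le_sum fun j _ => ?_
          gcongr
          calc _ ≤ ∑ i ∈ T, (M : ℝ) ^ 2 := by
                refine sum_le_sum fun i _ => sq_le_sq' ?_ ?_
                all_goals
                  have h := hx i j
                  have h2 : -(M : ℤ) ≤ x i j ∧ x i j ≤ M := by omega
                · exact_mod_cast h2.1
                · exact_mod_cast h2.2
            _ = _ := by simp [hn]
      _ = _ := by simp; ring
  -- Jensen's inequality in tangent form
  have hlow : (2 : ℝ) ^ n ≤ ∑ S ∈ T.powerset, Real.exp ((d : ℝ) / 2 - Real.pi / a * Q S) := by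
    calc (2 : ℝ) ^ n
        ≤ 2 ^ n * (1 + d / 2) - Real.pi / a * ∑ S ∈ T.powerset, Q S := by
          have h : Real.pi / a * ∑ S ∈ T.powerset, Q S
              ≤ Real.pi / a * (2 ^ n * (d * (n * M ^ 2 / 4))) :=
            mul_le_mul_of_nonneg_left hQsum (by rw [hs]; positivity)
          have h2 : Real.pi / a * (2 ^ n * (d * (n * M ^ 2 / 4))) = 2 ^ n * (d / 2) := by
            rw [hs]; field_simp; ring
          linarith
      _ = ∑ S ∈ T.powerset, ((d : ℝ) / 2 - Real.pi / a * Q S + 1) := by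
          rw [sum_add_distrib, sum_sub_distrib, ← mul_sum]
          simp [← hn]
          ring
      _ ≤ _ := sum_le_sum fun S _ => Real.add_one_le_exp _
  have hup : ∑ S ∈ T.powerset, Real.exp (-Real.pi / a * Q S)
      ≤ (Real.sqrt a * (17 / 15)) ^ d := by
    refine le_trans (le_of_eq ?_)
      (gaussian_sum_lattice_le ha μ (T.powerset.image fun S => ∑ i ∈ S, x i))
    rw [sum_image hinj]
    refine sum_congr rfl fun S _ => ?_
    simp [hQ]
  calc (2 : ℝ) ^ n ≤ _ := hlow
    _ = Real.exp (1 / 2) ^ d * ∑ S ∈ T.powerset, Real.exp (-Real.pi / a * Q S) := by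
        rw [← Real.exp_nat_mul, mul_sum]
        refine sum_congr rfl fun S _ => ?_
        rw [← Real.exp_add]
        congr 1
        ring
    _ ≤ Real.exp (1 / 2) ^ d * (Real.sqrt a * (17 / 15)) ^ d := by gcongr
    _ = _ := (mul_pow _ _ _).symm

/-- Solving the implicit estimate of `two_pow_le` for `n`. -/
lemma le_of_two_pow_le {d n M : ℕ} (hd : 1 ≤ d) (hn : 1 ≤ n) (hM : 1 ≤ M)
    (h : (2 : ℝ) ^ n
      ≤ (Real.exp (1 / 2) * (Real.sqrt (Real.pi * n * M ^ 2 / 2) * (17 / 15))) ^ d) :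
    (n : ℝ) ≤ 2 * (d : ℝ) * Real.logb 2 (2 * Real.sqrt d * M) := by
  have hd0 : (0 : ℝ) < d := by exact_mod_cast hd
  have hn0 : (0 : ℝ) < n := by exact_mod_cast hn
  have hM0 : (0 : ℝ) < M := by exact_mod_cast hM
  have hpi := Real.pi_pos
  have hl2 : 0 < Real.log 2 := Real.log_pos (by norm_num)
  have hl2' := Real.log_two_gt_d9
  have hpi' := Real.pi_lt_d2
  have h1 := Real.log_le_log (by positivity) h
  rw [Real.log_pow, Real.log_pow, Real.log_mul (by positivity) (by positivity), Real.log_exp,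
    Real.log_mul (by positivity) (by norm_num), Real.log_sqrt (by positivity)] at h1
  have hc : Real.log (17 / 15) = Real.log (289 / 225) / 2 := by
    rw [show (289 / 225 : ℝ) = (17 / 15) ^ 2 by norm_num, Real.log_pow]
    push_cast; ring
  have h2 : Real.log (Real.pi * n * M ^ 2 / 2) + Real.log (289 / 225)
      ≤ 2 * Real.log (2 * Real.sqrt d * M) + (n * Real.log 2 / d - 1) := by
    rw [← Real.log_mul (by positivity) (by norm_num)]
    have e : 2 * Real.log (2 * Real.sqrt d * M) = Real.log (4 * d * M ^ 2) := by
      rw [show (4 * d * M ^ 2 : ℝ) = (2 * Real.sqrt d * M) ^ 2 by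
        rw [mul_pow, mul_pow, Real.sq_sqrt hd0.le]; norm_num, Real.log_pow]
      push_cast; ring
    have hy := Real.log_le_sub_one_of_pos (x := n * Real.log 2 / d) (by positivity)
    rw [e]
    refine le_trans ?_ (add_le_add_right hy _)
    rw [← Real.log_mul (by positivity) (by positivity)]
    apply Real.log_le_log (by positivity)
    have e2 : 4 * (d : ℝ) * M ^ 2 * (n * Real.log 2 / d) = (4 * Real.log 2) * (n * M ^ 2) := by
      field_simp
    have e3 : Real.pi * n * M ^ 2 / 2 * (289 / 225) = (Real.pi * 289 / 450) * (n * M ^ 2) := by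
      ring
    rw [e2, e3]
    exact mul_le_mul_of_nonneg_right (by linarith) (by positivity)
  have h3 : (d : ℝ) * (1 / 2 + (Real.log (Real.pi * n * M ^ 2 / 2) / 2 + Real.log (17 / 15)))
      ≤ d * (Real.log (2 * Real.sqrt d * M) + (n * Real.log 2 / d) / 2) :=
    mul_le_mul_of_nonneg_left (by rw [hc]; linarith) hd0.le
  have h4 : (d : ℝ) * (Real.log (2 * Real.sqrt d * M) + (n * Real.log 2 / d) / 2)
      = d * Real.log (2 * Real.sqrt d * M) + n * Real.log 2 / 2 := by
    field_simp
  rw [Real.logb, mul_div_assoc', le_div_iff₀ hl2]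
  linarith

/-! ### Supports of minimal size -/

open Finset in
/-- Exchange step: if two disjoint sets inside the support have equal sums and the first one is
nonempty, then moving weight from the first to the second shrinks the support. -/
lemma exists_smaller_support {t d : ℕ} (x : Fin t → Fin d → ℤ) (lam : Fin t → ℕ)
    (D E : Finset (Fin t)) (hDne : D.Nonempty) (hdisj : Disjoint D E)
    (hD : ∀ i ∈ D, lam i ≠ 0) (hE : ∀ i ∈ E, lam i ≠ 0) (hsum : ∑ i ∈ D, x i = ∑ i ∈ E, x i) :
    ∃ lam' : Fin t → ℕ, ∑ i, (lam' i : ℤ) • x i = ∑ i, (lam i : ℤ) • x i ∧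
      (univ.filter fun i => lam' i ≠ 0).card < (univ.filter fun i => lam i ≠ 0).card := by
  obtain ⟨i₀, hi₀, hmin⟩ := exists_min_image D lam hDne
  have hi₀E : i₀ ∉ E := disjoint_left.1 hdisj hi₀
  refine ⟨fun i => if i ∈ D then lam i - lam i₀ else if i ∈ E then lam i + lam i₀ else lam i,
    ?_, ?_⟩
  · have h : ∀ i, (((if i ∈ D then lam i - lam i₀ else if i ∈ E then lam i + lam i₀
        else lam i : ℕ) : ℤ)) • x i = (lam i : ℤ) • x i
          + ((lam i₀ : ℤ) • (if i ∈ E then x i else 0)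
            - (lam i₀ : ℤ) • (if i ∈ D then x i else 0)) := by
      intro i
      by_cases h1 : i ∈ D
      · have h2 : i ∉ E := disjoint_left.1 hdisj h1
        simp only [h1, h2, if_true, if_false]
        rw [Nat.cast_sub (hmin i h1), sub_smul, smul_zero]
        abel
      · by_cases h2 : i ∈ E
        · simp only [h1, h2, if_true, if_false]
          push_cast
          rw [add_smul, smul_zero, sub_zero]
        · simp [h1, h2]
    simp only [h]
    rw [sum_add_distrib, sum_sub_distrib, ← smul_sum, ← smul_sum]
    simp [hsum]
  · apply card_lt_card
    rw [ssubset_iff_of_subset]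
    · exact ⟨i₀, by simp [hD i₀ hi₀], by simp [hi₀]⟩
    · intro i
      simp only [mem_filter, mem_univ, true_and]
      intro h hl
      by_cases h1 : i ∈ D
      · exact hD i h1 hl
      · by_cases h2 : i ∈ E
        · exact hE i h2 hl
        · simp [h1, h2, hl] at h

open Finset in
/-- Distinct subsets of a support of minimal size have distinct sums. -/
lemma subset_sums_injOn {t d : ℕ} (x : Fin t → Fin d → ℤ) (lam : Fin t → ℕ)
    (hmin : ∀ lam' : Fin t → ℕ, ∑ i, (lam' i : ℤ) • x i = ∑ i, (lam i : ℤ) • x i →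
      (univ.filter fun i => lam i ≠ 0).card ≤ (univ.filter fun i => lam' i ≠ 0).card) :
    Set.InjOn (fun S => ∑ i ∈ S, x i)
      ((univ.filter fun i => lam i ≠ 0).powerset : Set (Finset (Fin t))) := by
  have key : ∀ S S' : Finset (Fin t), S ⊆ (univ.filter fun i => lam i ≠ 0) →
      S' ⊆ (univ.filter fun i => lam i ≠ 0) → ∑ i ∈ S, x i = ∑ i ∈ S', x i → S ⊆ S' := by
    intro S S' hS hS' hsum
    by_contra hne
    obtain ⟨lam', h1, h2⟩ := exists_smaller_support x lam (S \ S') (S' \ S)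
      (sdiff_nonempty.2 hne) disjoint_sdiff_sdiff
      (fun i hi => (mem_filter.1 (hS (mem_sdiff.1 hi).1)).2)
      (fun i hi => (mem_filter.1 (hS' (mem_sdiff.1 hi).1)).2) (by
        have a1 := sum_inter_add_sum_sdiff S S' x
        have a2 := sum_inter_add_sum_sdiff S' S x
        rw [inter_comm] at a2
        rw [← a1, ← a2] at hsum
        exact add_left_cancel hsum)
    exact absurd (hmin lam' h1) (not_le.2 h2)
  intro S hS S' hS' hsum
  have hS := mem_powerset.1 (mem_coe.1 hS)
  have hS' := mem_powerset.1 (mem_coe.1 hS')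
  exact subset_antisymm (key S S' hS hS' hsum) (key S' S hS' hS hsum.symm)

/-- **Theorem 1(ii).** Let `X ⊂ ℤ^d` be a finite set of nonzero integer vectors.
Then `M₀(X) ≤ ⌊2d log₂(2 √d ‖X‖_∞)⌋`. -/
theorem M0_le_floor_two_d_log {d t : ℕ} (x : Fin t → Fin d → ℤ)
    (hinj : Function.Injective x) (hnz : ∀ i, x i ≠ 0)
    (b : Fin d → ℤ) (hb : b ∈ SgV x) :
    (m0V x b : ℤ) ≤ ⌊2 * (d : ℝ) * Real.logb 2 (2 * Real.sqrt d *
      ((Finset.univ.sup fun i => Finset.univ.sup fun j => (x i j).natAbs : ℕ) : ℝ))⌋ := by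
  obtain ⟨lam₀, hlam₀⟩ := hb
  obtain ⟨lam, hlam, hcard⟩ := Nat.sInf_mem (s := { k | ∃ lam : Fin t → ℕ,
    (∑ i, (lam i : ℤ) • x i = b) ∧ k = (Finset.univ.filter fun i => lam i ≠ 0).card })
    ⟨_, lam₀, hlam₀, rfl⟩
  have hmin : ∀ lam' : Fin t → ℕ, ∑ i, (lam' i : ℤ) • x i = ∑ i, (lam i : ℤ) • x i →
      (Finset.univ.filter fun i => lam i ≠ 0).card
        ≤ (Finset.univ.filter fun i => lam' i ≠ 0).card := by
    intro lam' h
    rw [← hcard]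
    exact Nat.sInf_le ⟨lam', h.trans hlam, rfl⟩
  have hinjOn := subset_sums_injOn x lam hmin
  change m0V x b = _ at hcard
  rw [hcard, Int.le_floor, Int.cast_natCast]
  set M := Finset.univ.sup fun i => Finset.univ.sup fun j => (x i j).natAbs with hM
  have hx : ∀ i j, (x i j).natAbs ≤ M := fun i j =>
    (Finset.le_sup (f := fun j => (x i j).natAbs) (Finset.mem_univ j)).trans
      (Finset.le_sup (f := fun i => Finset.univ.sup fun j => (x i j).natAbs) (Finset.mem_univ i))
  rcases isEmpty_or_nonempty (Fin t) with ht | ⟨⟨i₀⟩⟩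
  · -- `M = 0` here, and the right-hand side vanishes because `logb 2 0 = 0`
    have : M = 0 := by simp [hM]
    simp [this]
  obtain ⟨j₀, hj₀⟩ := Function.ne_iff.1 (hnz i₀)
  have hd1 : 1 ≤ d := j₀.pos
  have hM1 : 1 ≤ M := (Nat.one_le_iff_ne_zero.2 (Int.natAbs_ne_zero.2 hj₀)).trans (hx i₀ j₀)
  rcases Finset.eq_empty_or_nonempty (Finset.univ.filter fun i => lam i ≠ 0) with hT | hT
  · rw [hT, Finset.card_empty, Nat.cast_zero]
    refine mul_nonneg (by positivity) (Real.logb_nonneg (by norm_num) ?_)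
    have h1 : 1 ≤ Real.sqrt d := Real.one_le_sqrt.2 (by exact_mod_cast hd1)
    have h2 : (1 : ℝ) ≤ M := by exact_mod_cast hM1
    nlinarith
  · exact le_of_two_pow_le hd1 hT.card_pos hM1 (two_pow_le x _ M hM1 hT hx hinjOn)
end

section
/- Fix an m×n integer matrix A with m < n whose m rows are linearly independent. Then there exist n − m linearly independent integer vectors y_1, …, y_{n−m} ∈ ℤ^n with A·y_l = 0 for every l, satisfying ∏_{l=1}^{n−m} ‖y_l‖_∞ ≤ g^{−1}·√(det(A·Aᵀ)), where g is the greatest common divisor of the determinants of all m×m submatrices of A. -/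
open Matrix

/-!
The kernel lattice `Λ = {y ∈ ℤ^n : A y = 0}` has rank `d = n - m`. Unimodular column operations make
`A` lower triangular (`exists_unimodular_lowerTriangular`), which yields a unimodular matrix
`N = (D | B)` such that the columns of `B` form a basis of `Λ`.

The vectors `y_l` realise the successive minima of the sup norm on `Λ`. The sup norm ball of radius
`1/2` meets the real span of `Λ` in a central section of the unit cube, and Minkowski's second
theorem (`minkowski_second`) bounds the product of the minima, times the volume of this section, by
the covolume `√det (Bᵀ B)` of `Λ`. By Vaaler's theorem (`one_le_sqrt_det_mul_volume`) the section has
volume at least `1`, so `∏ ‖y_l‖ ≤ √det (Bᵀ B)` (`exists_small_independent_columns`). Finally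
`det (A Aᵀ) = det (A D)² det (Bᵀ B)` (`det_mul_transpose_mul_det_gram`), and `g` divides
`det (A D)`, which is nonzero (`dvd_det_mul_of_dvd_minors`), so `g √det (Bᵀ B) ≤ √det (A Aᵀ)`.

Minkowski's second theorem is proved in the basis provided by `exists_minimal_system`, in which the
integer points of size less than the `i`-th minimum involve only the first `i` coordinates. The body
`{p < λ_i / 2}` is followed modulo `ℤ^i × 0` as `i` increases. Passing from `λ_i` to `λ_{i+1}`
multiplies its volume by at least `(λ_{i+1} / λ_i)^(d - i - 1)`, reducing modulo one more coordinate
loses nothing because no two points of the body get identified, and the last image lies in the unit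
cube.

Vaaler's theorem follows by comparison with a Gaussian: the indicator of the section is a product of
indicators of `|⟨b_i, t⟩| < 1/2`, and replacing each of them by `exp (-π ⟨b_i, t⟩²)` can only
decrease the integral. This holds because the marginals of an even log-concave function are even
and decreasing away from `0`, by the Prékopa–Leindler inequality. The resulting Gaussian integral is
exactly `det (Bᵀ B)^(-1/2)`.
-/

/-! ### Integer matrices and lattice bases -/

/-- Unimodular column operations on the columns of index at least `k` clear the entries of the row
`r` to the right of column `k`, leaving untouched the rows that already vanish from column `k` on.
Euclid's algorithm; the induction is on the sum of the absolute values of the entries involved. -/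
lemma exists_unimodular_row_step {n : ℕ} (r : Fin n → ℤ) (k : ℕ) :
    ∀ (s : ℕ) (N : Matrix (Fin n) (Fin n) ℤ), IsUnit N.det →
      (∑ j : Fin n, if k ≤ j then ((r ᵥ* N) j).natAbs else 0) = s →
      ∃ N' : Matrix (Fin n) (Fin n) ℤ, IsUnit N'.det ∧
        (∀ w : Fin n → ℤ, (∀ j : Fin n, k ≤ j → (w ᵥ* N) j = 0) →
          (∀ j : Fin n, (w ᵥ* N') j = (w ᵥ* N) j)) ∧
        ∀ j : Fin n, k < j → (r ᵥ* N') j = 0 := by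
  intro s
  induction s using Nat.strong_induction_on with
  | _ s ih =>
  intro N hN hs
  by_cases h2 : ∃ i j : Fin n, k ≤ i ∧ k ≤ j ∧ i ≠ j ∧ (r ᵥ* N) i ≠ 0 ∧
      ((r ᵥ* N) i).natAbs ≤ ((r ᵥ* N) j).natAbs
  · -- one step of the Euclidean algorithm: add `±` column `i` to column `j`
    obtain ⟨i, j, hi, hj, hij, hri, hle⟩ := h2
    obtain ⟨c, hc⟩ : ∃ c : ℤ, ((r ᵥ* N) j + (r ᵥ* N) i * c).natAbs < ((r ᵥ* N) j).natAbs := by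
      rcases lt_or_gt_of_ne hri with h | h <;> rcases le_total ((r ᵥ* N) j) 0 with h' | h'
      · exact ⟨-1, by omega⟩
      · exact ⟨1, by omega⟩
      · exact ⟨1, by omega⟩
      · exact ⟨-1, by omega⟩
    have key : ∀ w : Fin n → ℤ, ∀ l, (w ᵥ* (N * transvection i j c)) l =
        if l = j then (w ᵥ* N) j + (w ᵥ* N) i * c else (w ᵥ* N) l := by
      intro w l
      rw [← vecMul_vecMul, transvection, vecMul_add, vecMul_one]
      simp only [Pi.add_apply, vecMul, dotProduct, Matrix.single_apply]
      by_cases hl : l = j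
      · subst hl; simp
      · simp [hl, Ne.symm hl]
    obtain ⟨N', h1, h2, h3⟩ := ih _ (by
        rw [← hs]
        refine Finset.sum_lt_sum (fun l _ => ?_) ⟨j, Finset.mem_univ _, ?_⟩
        · rw [key]
          by_cases hl : l = j
          · subst hl; simpa [hj] using hc.le
          · simp [hl]
        · rw [key]; simpa [hj] using hc) (N * transvection i j c)
      (by rw [det_mul, det_transvection_of_ne _ _ hij, mul_one]; exact hN) rfl
    refine ⟨N', h1, fun w hw l => ?_, h3⟩
    have hw' : ∀ l, (w ᵥ* (N * transvection i j c)) l = (w ᵥ* N) l := by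
      intro l
      rw [key]
      split_ifs with hl
      · rw [hw i hi, hl]; simp
      · rfl
    rw [h2 w (fun l hl => by rw [hw']; exact hw l hl), hw']
  · push Not at h2
    by_cases h0 : ∃ i : Fin n, k ≤ i ∧ (r ᵥ* N) i ≠ 0
    · obtain ⟨i, hi, hri⟩ := h0
      have hk : k < n := lt_of_le_of_lt hi i.2
      have key : ∀ w : Fin n → ℤ, ∀ l, (w ᵥ* (N.submatrix id (Equiv.swap ⟨k, hk⟩ i))) l =
          (w ᵥ* N) (Equiv.swap ⟨k, hk⟩ i l) := fun w l => rfl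
      have hsw : ∀ l : Fin n, k ≤ l → k ≤ (Equiv.swap ⟨k, hk⟩ i l : Fin n) := by
        intro l hl
        rw [Equiv.swap_apply_def]
        split_ifs <;> simp_all
      refine ⟨N.submatrix id (Equiv.swap ⟨k, hk⟩ i), ?_, fun w hw l => ?_, fun l hl => ?_⟩
      · rw [det_permute']
        exact ((Equiv.Perm.sign _).isUnit.map (Int.castRingHom ℤ)).mul hN
      · rw [key]
        by_cases hl : k ≤ l
        · rw [hw l hl, hw _ (hsw l hl)]
        · rw [Equiv.swap_apply_of_ne_of_ne]
          · rintro rfl; simp at hl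
          · rintro rfl; exact hl hi
      · rw [key]
        by_contra hne
        have hne' : i ≠ Equiv.swap ⟨k, hk⟩ i l := by
          intro h
          have : l = ⟨k, hk⟩ := by
            apply (Equiv.swap ⟨k, hk⟩ i).injective
            rw [← h]; simp
          subst this; simp at hl
        have a1 := h2 i _ hi (hsw l hl.le) hne' hri
        have a2 := h2 _ i (hsw l hl.le) hi hne'.symm hne
        omega
    · push Not at h0
      exact ⟨N, hN, fun w _ l => rfl, fun j hj => h0 j hj.le⟩

/-- Every integer matrix becomes lower triangular after unimodular column operations. -/
lemma exists_unimodular_lowerTriangular {k n : ℕ} (M : Matrix (Fin k) (Fin n) ℤ) :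
    ∃ N : Matrix (Fin n) (Fin n) ℤ, IsUnit N.det ∧
      ∀ (i : Fin k) (j : Fin n), (i : ℕ) < j → (M * N) i j = 0 := by
  suffices h : ∀ q : ℕ, ∃ N : Matrix (Fin n) (Fin n) ℤ, IsUnit N.det ∧
      ∀ (i : Fin k) (j : Fin n), (i : ℕ) < q → (i : ℕ) < j → (M * N) i j = 0 by
    obtain ⟨N, h1, h2⟩ := h k
    exact ⟨N, h1, fun i j => h2 i j i.2⟩
  intro q
  induction q with
  | zero => exact ⟨1, by simp, by simp⟩
  | succ q ih =>
    obtain ⟨N, hN, h⟩ := ih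
    by_cases hq : q < k
    · obtain ⟨N', h1, h2, h3⟩ := exists_unimodular_row_step (M ⟨q, hq⟩) q _ N hN rfl
      refine ⟨N', h1, fun i j hi hij => ?_⟩
      rw [mul_apply_eq_vecMul]
      rcases Nat.lt_succ_iff_lt_or_eq.mp hi with hi | hi
      · rw [h2 (M i) (fun l hl => ?_), ← mul_apply_eq_vecMul]
        · exact h i j hi hij
        · rw [← mul_apply_eq_vecMul]; exact h i l hi (by omega)
      · have : i = ⟨q, hq⟩ := Fin.ext hi
        rw [this]; exact h3 j (by omega)
    · exact ⟨N, hN, fun i j hi => h i j (by omega)⟩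

/-- A common divisor of the maximal minors of `A` divides `det (A * D)`: expanding the determinant
multilinearly writes it as an integer combination of these minors, as in the Cauchy–Binet formula. -/
lemma dvd_det_mul_of_dvd_minors {m n : ℕ} (A : Matrix (Fin m) (Fin n) ℤ)
    (D : Matrix (Fin n) (Fin m) ℤ) (g : ℤ)
    (hg : ∀ c : Fin m ↪ Fin n, g ∣ (A.submatrix id c).det) : g ∣ (A * D).det := by
  have h : (A * D).det = ∑ f : Fin m → Fin n,
      (∏ i, D (f i) i) * (A.submatrix id f).det := by
    rw [← det_transpose]
    have e : (A * D)ᵀ = fun i => ∑ j, D j i • Aᵀ j := by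
      ext i l
      simp [Matrix.mul_apply, mul_comm]
    rw [e]
    have := (detRowAlternating (n := Fin m) (R := ℤ)).toMultilinearMap.map_sum
      (fun i j => D j i • Aᵀ j)
    refine (this.trans (Finset.sum_congr rfl fun f _ => ?_))
    rw [MultilinearMap.map_smul_univ, smul_eq_mul]
    congr 1
    exact (det_transpose (A.submatrix id f)).symm ▸ rfl
  rw [h]
  refine Finset.dvd_sum fun f _ => Dvd.dvd.mul_left ?_ _
  by_cases hf : Function.Injective f
  · exact hg ⟨f, hf⟩
  · obtain ⟨a, b, hab, hne⟩ : ∃ a b, f a = f b ∧ a ≠ b := by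
      simpa [Function.Injective] using hf
    rw [det_zero_of_column_eq hne (fun i => by simp [hab])]
    exact dvd_zero _

/-- Let `N = (D | B)` be unimodular with `A * B = 0`. The square matrix with blocks `A`, `Bᵀ` has
Gram matrix `diag (A * Aᵀ, Bᵀ * B)`, and its product with `N` is block triangular with diagonal
blocks `A * D`, `Bᵀ * B`. Comparing determinants gives the identity. -/
lemma det_mul_transpose_mul_det_gram {m d : ℕ} (A : Matrix (Fin m) (Fin (m + d)) ℤ)
    (N : Matrix (Fin (m + d)) (Fin (m + d)) ℤ) (hN : IsUnit N.det)
    (hB : A * N.submatrix id (Fin.natAdd m) = 0) :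
    (A * Aᵀ).det * ((N.submatrix id (Fin.natAdd m))ᵀ * N.submatrix id (Fin.natAdd m)).det =
      (A * N.submatrix id (Fin.castAdd d)).det ^ 2 *
      ((N.submatrix id (Fin.natAdd m))ᵀ * N.submatrix id (Fin.natAdd m)).det ^ 2 := by
  set B := N.submatrix id (Fin.natAdd m) with hBdef
  set D := N.submatrix id (Fin.castAdd d) with hDdef
  let Y : Matrix (Fin m ⊕ Fin d) (Fin (m + d)) ℤ := fromRows A Bᵀ
  have e1 : Y * Yᵀ = fromBlocks (A * Aᵀ) 0 0 (Bᵀ * B) := by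
    simp only [Y, transpose_fromRows, fromRows_mul_fromCols, transpose_transpose]
    rw [hB]
    congr 1
    rw [← transpose_mul, hB, transpose_zero]
  have hN' : N.submatrix id finSumFinEquiv = fromCols D B := by
    ext i j
    cases j <;> simp [D, B]
  have e2 : Y * N.submatrix id finSumFinEquiv = fromBlocks (A * D) 0 (Bᵀ * D) (Bᵀ * B) := by
    rw [hN']
    simp only [Y, fromRows_mul_fromCols, hB]
  let Y' := Y.submatrix id (finSumFinEquiv (m := m) (n := d))
  let N1 := N.submatrix (finSumFinEquiv (m := m) (n := d)) finSumFinEquiv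
  have e1' : Y' * Y'ᵀ = fromBlocks (A * Aᵀ) 0 0 (Bᵀ * B) := by
    rw [← e1]
    simp only [Y', transpose_submatrix]
    rw [submatrix_mul_equiv]; simp
  have e2' : Y' * N1 = fromBlocks (A * D) 0 (Bᵀ * D) (Bᵀ * B) := by
    rw [← e2]
    simp only [Y', N1]
    rw [submatrix_mul_equiv]; rfl
  have d1 := congrArg det e1'
  have d2 := congrArg det e2'
  rw [det_mul, det_transpose, det_fromBlocks_zero₂₁] at d1
  rw [det_mul, det_fromBlocks_zero₁₂] at d2
  have d3 : N1.det = N.det := det_submatrix_equiv_self _ _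
  have d4 : N.det ^ 2 = 1 := by
    rcases Int.isUnit_iff.mp hN with h | h <;> simp [h]
  rw [d3] at d2
  calc _ = Y'.det * Y'.det := d1.symm
    _ = (Y'.det * N.det) ^ 2 := by rw [mul_pow, d4]; ring
    _ = _ := by rw [d2]; ring

/-- Successive minima with an adapted lattice basis, for an arbitrary size function `ν` on `ℤ^d`.
The rows of `Z` are independent with `∑ ν` minimal, sorted by size; the rows of `N` are a basis
of `ℤ^d` with respect to which `Z` is lower triangular. A vector smaller than the `i`-th row of `Z`
only involves the first `i` basis vectors, since otherwise exchanging it with a row of `Z` of index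
at least `i` would keep the rows independent and lower the sum. -/
lemma exists_minimal_system {d : ℕ} (ν : (Fin d → ℤ) → ℕ) :
    ∃ Z N : Matrix (Fin d) (Fin d) ℤ, Z.det ≠ 0 ∧ IsUnit N.det ∧
      Monotone (fun i => ν (Z i)) ∧
      ∀ (t : Fin d → ℤ) (i : Fin d), ν (t ᵥ* N) < ν (Z i) → ∀ j, i ≤ j → t j = 0 := by
  classical
  have hex : ∃ s : ℕ, ∃ Z : Matrix (Fin d) (Fin d) ℤ, Z.det ≠ 0 ∧ ∑ i, ν (Z i) = s :=
    ⟨_, 1, by simp, rfl⟩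
  obtain ⟨Z₀, hZ₀, hs₀⟩ := Nat.find_spec hex
  have hmin : ∀ Z : Matrix (Fin d) (Fin d) ℤ, Z.det ≠ 0 → ∑ i, ν (Z₀ i) ≤ ∑ i, ν (Z i) := by
    intro Z hZ
    rw [hs₀]
    exact Nat.find_min' hex ⟨Z, hZ, rfl⟩
  let σ := Tuple.sort (fun i => ν (Z₀ i))
  have hmono : Monotone ((fun i => ν (Z₀ i)) ∘ σ) := Tuple.monotone_sort _
  let Z : Matrix (Fin d) (Fin d) ℤ := Z₀.submatrix σ id
  have hZ : Z.det ≠ 0 := by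
    simp only [Z]
    rw [det_permute]
    exact mul_ne_zero (by simp) hZ₀
  have hsum : ∑ i, ν (Z i) = ∑ i, ν (Z₀ i) := Equiv.sum_comp σ (fun i => ν (Z₀ i))
  obtain ⟨N, hN, htri⟩ := exists_unimodular_lowerTriangular Z
  have hT : (Z * N).IsLowerTriangular := fun i j hij => htri i j hij
  have hTdet : (Z * N).det ≠ 0 := by
    rw [det_mul]; exact mul_ne_zero hZ hN.ne_zero
  have hdiag : ∀ i, (Z * N) i i ≠ 0 := by
    rw [det_of_isLowerTriangular _ hT] at hTdet
    intro i
    exact Finset.prod_ne_zero_iff.mp hTdet i (Finset.mem_univ _)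
  refine ⟨Z, N⁻¹, hZ, ?_, hmono, fun t i hlt => ?_⟩
  · exact (isUnit_nonsing_inv_det N hN)
  by_contra hcon
  push Not at hcon
  obtain ⟨j₀, hj₀, hj₀'⟩ := hcon
  -- exchange the row whose index is the last one in the support of `t`
  obtain ⟨j, hj, hjmax⟩ := (Finset.univ.filter fun l => t l ≠ 0).exists_max_image id
    ⟨j₀, by simpa using hj₀'⟩
  simp only [Finset.mem_filter, Finset.mem_univ, true_and, id] at hj hjmax
  have hij : i ≤ j := hj₀.trans (hjmax _ hj₀')
  have hlow : ((Z * N).updateRow j t).IsLowerTriangular := by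
    intro a b hab
    change a < b at hab
    by_cases haj : a = j
    · subst haj
      rw [updateRow_self]
      by_contra hne
      exact absurd (hjmax b hne) (not_le.mpr hab)
    · rw [updateRow_ne haj]; exact hT hab
  have hdet : ((Z * N).updateRow j t).det ≠ 0 := by
    rw [det_of_isLowerTriangular _ hlow]
    refine Finset.prod_ne_zero_iff.mpr fun a _ => ?_
    by_cases haj : a = j
    · subst haj; rwa [updateRow_self]
    · rw [updateRow_ne haj]; exact hdiag a
  have heq : (Z * N).updateRow j t = Z.updateRow j (t ᵥ* N⁻¹) * N := by
    ext a b
    rw [mul_apply_eq_vecMul]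
    by_cases haj : a = j
    · subst haj; rw [updateRow_self, updateRow_self, vecMul_vecMul, nonsing_inv_mul N hN, vecMul_one]
    · rw [updateRow_ne haj, updateRow_ne haj, mul_apply_eq_vecMul]
  rw [heq, det_mul] at hdet
  have h1 := hmin _ (left_ne_zero_of_mul hdet)
  rw [← hsum] at h1
  refine absurd h1 (not_le.mpr (Finset.sum_lt_sum (fun a _ => ?_) ⟨j, Finset.mem_univ _, ?_⟩))
  · by_cases haj : a = j
    · subst haj; rw [updateRow_self]; exact (hlt.trans_le (hmono hij)).le
    · rw [updateRow_ne haj]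
  · rw [updateRow_self]; exact hlt.trans_le (hmono hij)

/-! ### The Prékopa–Leindler inequality -/

section CubeSections

open MeasureTheory
open scoped Pointwise ENNReal

lemma volume_add_le_of_isCompact {A B : Set ℝ} (hA : IsCompact A) (hB : IsCompact B)
    (hA0 : A.Nonempty) (hB0 : B.Nonempty) : volume A + volume B ≤ volume (A + B) := by
  -- the translates `A + min B` and `max A + B` lie in `A + B` and meet in one point
  obtain ⟨b, hb, hbmin⟩ := hB.exists_isLeast hB0
  obtain ⟨a, ha, hamax⟩ := hA.exists_isGreatest hA0
  have h1 : volume ((fun x => x + b) '' A) = volume A := by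
    simp
  have h2 : volume ((fun x => a + x) '' B) = volume B := by
    simp
  have hm : MeasurableSet ((fun x => a + x) '' B) :=
    (hB.image (by fun_prop)).isClosed.measurableSet
  have hd : AEDisjoint volume ((fun x => x + b) '' A) ((fun x => a + x) '' B) := by
    refine measure_mono_null (t := {a + b}) ?_ (by simp)
    rintro _ ⟨⟨x, hx, rfl⟩, ⟨y, hy, hxy⟩⟩
    have := hamax hx
    have := hbmin hy
    simp only at hxy ⊢
    rw [Set.mem_singleton_iff]
    linarith
  rw [← h1, ← h2, ← measure_union₀ hm.nullMeasurableSet hd]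
  refine measure_mono (Set.union_subset ?_ ?_)
  · rintro _ ⟨x, hx, rfl⟩; exact Set.add_mem_add hx hb
  · rintro _ ⟨y, hy, rfl⟩; exact Set.add_mem_add ha hy

/-- Brunn–Minkowski inequality on the line, by inner approximation with compact sets. -/
lemma brunn_minkowski_one {A B C : Set ℝ} (hA : MeasurableSet A) (hB : MeasurableSet B)
    (hA0 : A.Nonempty) (hB0 : B.Nonempty) (h : ∀ x ∈ A, ∀ y ∈ B, x + y ∈ C) :
    volume A + volume B ≤ volume C := by
  obtain ⟨a, ha⟩ := hA0
  obtain ⟨b, hb⟩ := hB0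
  rw [hA.measure_eq_iSup_isCompact, hB.measure_eq_iSup_isCompact]
  simp only [iSup_and']
  refine ENNReal.biSup_add_biSup_le' ⟨∅, by simp⟩ ⟨∅, by simp⟩ ?_
  rintro K ⟨hKA, hK⟩ K' ⟨hKB, hK'⟩
  calc volume K + volume K' ≤ volume (insert a K) + volume (insert b K') := by
        gcongr <;> exact Set.subset_insert _ _
    _ ≤ volume (insert a K + insert b K') :=
        volume_add_le_of_isCompact (hK.insert a) (hK'.insert b) ⟨a, by simp⟩ ⟨b, by simp⟩
    _ ≤ volume C := by
        refine measure_mono ?_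
        rintro _ ⟨x, hx, y, hy, rfl⟩
        refine h x ?_ y ?_
        · rcases hx with rfl | hx
          exacts [ha, hKA hx]
        · rcases hy with rfl | hy
          exacts [hb, hKB hy]

/-- Layer-cake formula. The bound `f ≤ 1` only serves to avoid the value `∞`. -/
lemma lintegral_eq_lintegral_superlevel {f : ℝ → ℝ≥0∞} (hf : Measurable f) (hf1 : ∀ x, f x ≤ 1) :
    ∫⁻ x, f x = ∫⁻ t in Set.Ioi (0 : ℝ), volume {x | ENNReal.ofReal t < f x} := by
  have hfin : ∀ x, f x ≠ ∞ := fun x => ((hf1 x).trans_lt ENNReal.one_lt_top).ne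
  have := lintegral_eq_lintegral_meas_lt (volume : Measure ℝ) (f := fun x => (f x).toReal)
    (ae_of_all _ fun x => ENNReal.toReal_nonneg) hf.ennreal_toReal.aemeasurable
  simp only [ENNReal.ofReal_toReal (hfin _)] at this
  rw [this]
  refine setLIntegral_congr_fun measurableSet_Ioi fun t ht => ?_
  have : {x | t < (f x).toReal} = {x | ENNReal.ofReal t < f x} := by
    ext x
    exact (ENNReal.ofReal_lt_iff_lt_toReal (le_of_lt ht) (hfin x)).symm
  simp only [this]

/-- Prékopa–Leindler on the line for functions of supremum `1`, in the stronger arithmetic-mean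
form: the superlevel sets `{f > t}` and `{g > t}` are nonempty for the same `t`, so
`brunn_minkowski_one` applies to them, and integrating over `t` gives the claim. -/
lemma prekopa_leindler_one_normalized {f g h : ℝ → ℝ≥0∞} (hf : Measurable f) (hg : Measurable g)
    (hh : Measurable h) (hf1 : ⨆ x, f x = 1) (hg1 : ⨆ x, g x = 1) {a b : ℝ} (ha : 0 < a)
    (hb : 0 < b) (hle : ∀ x y, min (f x) (g y) ≤ h (a * x + b * y)) :
    ENNReal.ofReal a * (∫⁻ x, f x) + ENNReal.ofReal b * (∫⁻ x, g x) ≤ ∫⁻ x, h x := by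
  have hf1' : ∀ x, f x ≤ 1 := fun x => hf1 ▸ le_iSup f x
  have hg1' : ∀ x, g x ≤ 1 := fun x => hg1 ▸ le_iSup g x
  have hmono : ∀ f : ℝ → ℝ≥0∞, Antitone fun t : ℝ => volume {x | ENNReal.ofReal t < f x} :=
    fun f s t hst => measure_mono fun x hx => (ENNReal.ofReal_le_ofReal hst).trans_lt hx
  calc ENNReal.ofReal a * (∫⁻ x, f x) + ENNReal.ofReal b * (∫⁻ x, g x)
      = ∫⁻ t in Set.Ioi (0 : ℝ), (ENNReal.ofReal a * volume {x | ENNReal.ofReal t < f x} +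
          ENNReal.ofReal b * volume {x | ENNReal.ofReal t < g x}) := by
        rw [lintegral_eq_lintegral_superlevel hf hf1', lintegral_eq_lintegral_superlevel hg hg1',
          lintegral_add_left ((hmono f).measurable.const_mul _),
          lintegral_const_mul _ (hmono f).measurable, lintegral_const_mul _ (hmono g).measurable]
    _ ≤ ∫⁻ t in Set.Ioi (0 : ℝ), volume {x | ENNReal.ofReal t < min (h x) 1} := by
        refine setLIntegral_mono (hmono _).measurable fun t ht => ?_
        by_cases ht1 : t < 1
        · have hlt : ENNReal.ofReal t < 1 := by simpa using ht1
          obtain ⟨x₀, hx₀⟩ := lt_iSup_iff.mp (hf1.symm ▸ hlt)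
          obtain ⟨y₀, hy₀⟩ := lt_iSup_iff.mp (hg1.symm ▸ hlt)
          rw [← abs_of_pos ha, ← abs_of_pos hb]
          have e : ∀ c : ℝ, ∀ S : Set ℝ, ENNReal.ofReal |c| * volume S = volume (c • S) := by
            intro c S
            rw [Measure.addHaar_smul]; simp
          rw [e, e]
          refine brunn_minkowski_one
            ((measurableSet_lt measurable_const hf).const_smul₀ a)
            ((measurableSet_lt measurable_const hg).const_smul₀ b)
            (Set.Nonempty.smul_set ⟨x₀, hx₀⟩) (Set.Nonempty.smul_set ⟨y₀, hy₀⟩) ?_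
          rintro _ ⟨x, hx, rfl⟩ _ ⟨y, hy, rfl⟩
          exact lt_min ((lt_min hx hy).trans_le (hle x y)) hlt
        · have hemp : ∀ f : ℝ → ℝ≥0∞, (∀ x, f x ≤ 1) → {x | ENNReal.ofReal t < f x} = ∅ := by
            intro f hf
            rw [Set.eq_empty_iff_forall_notMem]
            intro x hx
            have h1 : ENNReal.ofReal t < 1 := lt_of_lt_of_le hx (hf x)
            exact ht1 (by simpa using h1)
          rw [hemp f hf1', hemp g hg1']
          simp
    _ = ∫⁻ x, min (h x) 1 :=
        (lintegral_eq_lintegral_superlevel (hh.min measurable_const) fun x => min_le_right _ _).symm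
    _ ≤ _ := lintegral_mono fun x => min_le_left _ _

lemma geom_mean_le {a b : ℝ} (ha : 0 < a) (hb : 0 < b) (hab : a + b = 1) (x y : ℝ≥0∞) :
    x ^ a * y ^ b ≤ ENNReal.ofReal a * x + ENNReal.ofReal b * y := by
  have := ENNReal.young_inequality (x ^ a) (y ^ b) (Real.HolderConjugate.inv_inv ha hb hab)
  rw [← ENNReal.rpow_mul, ← ENNReal.rpow_mul, mul_inv_cancel₀ ha.ne', mul_inv_cancel₀ hb.ne',
    ENNReal.rpow_one, ENNReal.rpow_one, ENNReal.ofReal_inv_of_pos ha, ENNReal.ofReal_inv_of_pos hb,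
    div_eq_mul_inv, div_eq_mul_inv, inv_inv, inv_inv] at this
  rwa [mul_comm _ x, mul_comm _ y]

lemma min_le_geom_mean {a b : ℝ} (ha : 0 < a) (hb : 0 < b) (hab : a + b = 1) (x y : ℝ≥0∞) :
    min x y ≤ x ^ a * y ^ b := by
  calc min x y = min x y ^ a * min x y ^ b := by
        rw [← ENNReal.rpow_add_of_nonneg _ _ ha.le hb.le, hab, ENNReal.rpow_one]
    _ ≤ _ := mul_le_mul' (ENNReal.rpow_le_rpow (min_le_left _ _) ha.le)
        (ENNReal.rpow_le_rpow (min_le_right _ _) hb.le)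

lemma prekopa_leindler_one_bounded {f g h : ℝ → ℝ≥0∞} (hf : Measurable f) (hg : Measurable g)
    (hh : Measurable h) (hf1 : ⨆ x, f x ≠ ∞) (hg1 : ⨆ x, g x ≠ ∞) {a b : ℝ} (ha : 0 < a)
    (hb : 0 < b) (hab : a + b = 1) (hle : ∀ x y, f x ^ a * g y ^ b ≤ h (a * x + b * y)) :
    (∫⁻ x, f x) ^ a * (∫⁻ x, g x) ^ b ≤ ∫⁻ x, h x := by
  set M := ⨆ x, f x with hM
  set M' := ⨆ x, g x with hM'
  by_cases h0 : M = 0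
  · have : ∀ x, f x = 0 := fun x => le_antisymm (h0 ▸ le_iSup f x) (zero_le)
    simp [this, ha]
  by_cases h0' : M' = 0
  · have : ∀ x, g x = 0 := fun x => le_antisymm (h0' ▸ le_iSup g x) (zero_le)
    simp [this, hb]
  set c := M ^ a * M' ^ b with hc
  have hc0 : c ≠ 0 := mul_ne_zero (by simp [h0, hf1]) (by simp [h0', hg1])
  have hct : c ≠ ∞ := ENNReal.mul_ne_top (ENNReal.rpow_ne_top_of_nonneg ha.le hf1)
    (ENNReal.rpow_ne_top_of_nonneg hb.le hg1)
  have hkey : ∀ x y : ℝ≥0∞, (x / M) ^ a * (y / M') ^ b = x ^ a * y ^ b / c := by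
    intro x y
    rw [ENNReal.div_rpow_of_nonneg _ _ ha.le, ENNReal.div_rpow_of_nonneg _ _ hb.le, hc,
      div_eq_mul_inv, div_eq_mul_inv, div_eq_mul_inv, ENNReal.mul_inv]
    · ring
    · exact Or.inl (by simp [h0, hf1])
    · exact Or.inl (ENNReal.rpow_ne_top_of_nonneg ha.le hf1)
  have h1 := prekopa_leindler_one_normalized (f := fun x => f x / M) (g := fun x => g x / M')
    (h := fun x => h x / c) (hf.div_const _) (hg.div_const _) (hh.div_const _)
    (by rw [← ENNReal.iSup_div, ← hM, ENNReal.div_self h0 hf1])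
    (by rw [← ENNReal.iSup_div, ← hM', ENNReal.div_self h0' hg1]) ha hb (fun x y => by
      refine (min_le_geom_mean ha hb hab _ _).trans ?_
      rw [hkey]
      exact ENNReal.div_le_div_right (hle x y) _)
  have h2 := (geom_mean_le ha hb hab _ _).trans h1
  simp only [div_eq_mul_inv] at h2
  rw [lintegral_mul_const _ hf, lintegral_mul_const _ hg, lintegral_mul_const _ hh] at h2
  simp only [← div_eq_mul_inv] at h2
  rw [hkey] at h2
  rwa [ENNReal.div_le_iff hc0 hct, ENNReal.div_mul_cancel hc0 hct] at h2

/-- Prékopa–Leindler on the line; unbounded functions are truncated at integer heights. -/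
lemma prekopa_leindler_one {f g h : ℝ → ℝ≥0∞} (hf : Measurable f) (hg : Measurable g)
    (hh : Measurable h) {a b : ℝ} (ha : 0 < a)
    (hb : 0 < b) (hab : a + b = 1) (hle : ∀ x y, f x ^ a * g y ^ b ≤ h (a * x + b * y)) :
    (∫⁻ x, f x) ^ a * (∫⁻ x, g x) ^ b ≤ ∫⁻ x, h x := by
  have htr : ∀ f : ℝ → ℝ≥0∞, Measurable f → ∀ c : ℝ, 0 < c →
      (∫⁻ x, f x) ^ c = ⨆ n : ℕ, (∫⁻ x, min (f x) n) ^ c := by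
    intro f hf c hc
    have e : ∀ x, f x = ⨆ n : ℕ, min (f x) n := by
      intro x
      rw [← inf_iSup_eq, ENNReal.iSup_natCast]; simp
    have e2 : ∫⁻ x, f x = ⨆ n : ℕ, ∫⁻ x, min (f x) n := by
      rw [← lintegral_iSup (fun n => hf.min measurable_const)]
      · exact lintegral_congr e
      · intro m n hmn x
        exact min_le_min le_rfl (by exact_mod_cast hmn)
    rw [e2]
    exact (ENNReal.orderIsoRpow c hc).map_iSup _
  rw [htr f hf a ha, htr g hg b hb, ENNReal.iSup_mul]
  refine iSup_le fun m => ?_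
  rw [ENNReal.mul_iSup]
  refine iSup_le fun n => ?_
  refine prekopa_leindler_one_bounded (hf.min measurable_const) (hg.min measurable_const) hh
    ?_ ?_ ha hb hab fun x y => le_trans ?_ (hle x y)
  · exact ((iSup_le fun x => min_le_right _ _).trans_lt (ENNReal.natCast_lt_top m)).ne
  · exact ((iSup_le fun x => min_le_right _ _).trans_lt (ENNReal.natCast_lt_top n)).ne
  · exact mul_le_mul' (ENNReal.rpow_le_rpow (min_le_left _ _) ha.le)
        (ENNReal.rpow_le_rpow (min_le_left _ _) hb.le)

lemma lintegral_insertNth {k : ℕ} (j : Fin (k + 1)) {f : (Fin (k + 1) → ℝ) → ℝ≥0∞}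
    (hf : Measurable f) :
    ∫⁻ x, f x = ∫⁻ s : ℝ, ∫⁻ w : Fin k → ℝ, f (j.insertNth s w) := by
  have hE := (volume_preserving_piFinSuccAbove (fun _ : Fin (k + 1) => ℝ) j).symm
  rw [← hE.lintegral_comp hf, Measure.volume_eq_prod]
  exact lintegral_prod _ (hf.comp (MeasurableEquiv.measurable _)).aemeasurable

lemma measurable_insertNth {k : ℕ} (j : Fin (k + 1)) :
    Measurable fun q : ℝ × (Fin k → ℝ) => (j.insertNth q.1 q.2 : Fin (k + 1) → ℝ) :=
  (MeasurableEquiv.piFinSuccAbove (fun _ : Fin (k + 1) => ℝ) j).symm.measurable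

lemma insertNth_combo {k : ℕ} (j : Fin (k + 1)) (a b s t : ℝ) (v w : Fin k → ℝ) :
    (j.insertNth (a * s + b * t) (a • v + b • w) : Fin (k + 1) → ℝ) =
      a • (j.insertNth s v : Fin (k + 1) → ℝ) + b • (j.insertNth t w : Fin (k + 1) → ℝ) := by
  ext l
  refine Fin.succAboveCases j ?_ (fun i => ?_) l <;> simp

/-- The Prékopa–Leindler inequality on `ℝ^k`, by Fubini and induction on the dimension. -/
lemma prekopa_leindler {k : ℕ} {f g h : (Fin k → ℝ) → ℝ≥0∞} (hf : Measurable f) (hg : Measurable g)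
    (hh : Measurable h) {a b : ℝ} (ha : 0 < a)
    (hb : 0 < b) (hab : a + b = 1) (hle : ∀ x y, f x ^ a * g y ^ b ≤ h (a • x + b • y)) :
    (∫⁻ x, f x) ^ a * (∫⁻ x, g x) ^ b ≤ ∫⁻ x, h x := by
  induction k with
  | zero =>
    rw [volume_pi, Measure.pi_of_empty, lintegral_dirac, lintegral_dirac, lintegral_dirac]
    refine (hle _ _).trans (le_of_eq ?_)
    congr 1; subsingleton
  | succ k ih =>
    have hm : ∀ {f : (Fin (k + 1) → ℝ) → ℝ≥0∞}, Measurable f →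
        Measurable fun q : ℝ × (Fin k → ℝ) => f ((0 : Fin (k + 1)).insertNth q.1 q.2) :=
      fun hf => hf.comp (measurable_insertNth 0)
    rw [lintegral_insertNth 0 hf, lintegral_insertNth 0 hg, lintegral_insertNth 0 hh]
    refine prekopa_leindler_one (hm hf).lintegral_prod_right' (hm hg).lintegral_prod_right'
      (hm hh).lintegral_prod_right' ha hb hab fun s t => ?_
    refine ih ((hm hf).comp measurable_prodMk_left) ((hm hg).comp measurable_prodMk_left)
      ((hm hh).comp measurable_prodMk_left) fun v w => ?_
    rw [insertNth_combo]
    exact hle _ _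

/-! ### Volume of central sections of the cube -/

/-- Even log-concave measurable functions with values in `[0, ∞]`. Log-concavity is required for
positive weights `a`, `b` only, which avoids the value `0 ^ 0` at the endpoints. -/
structure EvenLogConcave {E : Type*} [AddCommGroup E] [Module ℝ E] [MeasurableSpace E]
    (f : E → ℝ≥0∞) : Prop where
  measurable : Measurable f
  even : ∀ x, f (-x) = f x
  le_combo : ∀ {a b : ℝ}, 0 < a → 0 < b → a + b = 1 → ∀ x y,
    f x ^ a * f y ^ b ≤ f (a • x + b • y)

lemma EvenLogConcave.finsetProd {E ι : Type*} [AddCommGroup E] [Module ℝ E] [MeasurableSpace E]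
    (s : Finset ι) {f : ι → E → ℝ≥0∞} (hf : ∀ i ∈ s, EvenLogConcave (f i)) :
    EvenLogConcave fun x => ∏ i ∈ s, f i x where
  measurable := Finset.measurable_fun_prod s fun i hi => (hf i hi).measurable
  even x := Finset.prod_congr rfl fun i hi => (hf i hi).even x
  le_combo {a b} ha hb hab x y := by
    rw [← ENNReal.prod_rpow_of_nonneg ha.le, ← ENNReal.prod_rpow_of_nonneg hb.le,
      ← Finset.prod_mul_distrib]
    exact Finset.prod_le_prod' fun i hi => (hf i hi).le_combo ha hb hab x y

lemma EvenLogConcave.comp_linear {E F : Type*} [AddCommGroup E] [Module ℝ E] [MeasurableSpace E]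
    [AddCommGroup F] [Module ℝ F] [MeasurableSpace F] {f : F → ℝ≥0∞} (hf : EvenLogConcave f)
    (T : E →ₗ[ℝ] F) (hT : Measurable T) : EvenLogConcave fun x => f (T x) where
  measurable := hf.measurable.comp hT
  even x := by rw [map_neg, hf.even]
  le_combo {a b} ha hb hab x y := by
    rw [map_add, map_smul, map_smul]
    exact hf.le_combo ha hb hab _ _

/-- The Gaussian density `exp (-π s²)`, of total mass and maximum `1`. -/
noncomputable def gaussDensity (s : ℝ) : ℝ≥0∞ := ENNReal.ofReal (Real.exp (-Real.pi * s ^ 2))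

/-- The indicator function of the open interval `(-1/2, 1/2)`. -/
noncomputable def boxDensity (s : ℝ) : ℝ≥0∞ := Set.indicator {s : ℝ | |s| < 1 / 2} 1 s

lemma evenLogConcave_gaussDensity : EvenLogConcave gaussDensity where
  measurable := by unfold gaussDensity; fun_prop
  even x := by simp [gaussDensity]
  le_combo {a b} ha hb hab x y := by
    simp only [gaussDensity, smul_eq_mul]
    rw [ENNReal.ofReal_rpow_of_nonneg (Real.exp_nonneg _) ha.le,
      ENNReal.ofReal_rpow_of_nonneg (Real.exp_nonneg _) hb.le, ← Real.exp_mul, ← Real.exp_mul,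
      ← ENNReal.ofReal_mul (Real.exp_nonneg _), ← Real.exp_add]
    refine ENNReal.ofReal_le_ofReal (Real.exp_le_exp.mpr ?_)
    have hb' : b = 1 - a := by linarith
    have h1 : (a * x + b * y) ^ 2 ≤ a * x ^ 2 + b * y ^ 2 := by
      have : a * x ^ 2 + b * y ^ 2 - (a * x + b * y) ^ 2 = a * b * (x - y) ^ 2 := by
        rw [hb']; ring
      nlinarith [mul_nonneg (mul_nonneg ha.le hb.le) (sq_nonneg (x - y))]
    nlinarith [Real.pi_pos, mul_le_mul_of_nonneg_left h1 Real.pi_pos.le]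

lemma measurableSet_box : MeasurableSet {s : ℝ | |s| < 1 / 2} :=
  measurableSet_lt (by fun_prop) measurable_const

lemma boxDensity_of_lt {s : ℝ} (h : |s| < 1 / 2) : boxDensity s = 1 :=
  Set.indicator_of_mem (s := {s : ℝ | |s| < 1 / 2}) h _

lemma boxDensity_of_not_lt {s : ℝ} (h : ¬ |s| < 1 / 2) : boxDensity s = 0 :=
  Set.indicator_of_notMem (s := {s : ℝ | |s| < 1 / 2}) h _

lemma evenLogConcave_boxDensity : EvenLogConcave boxDensity where
  measurable := measurable_one.indicator measurableSet_box
  even x := by simp [boxDensity, Set.indicator_apply]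
  le_combo {a b} ha hb hab x y := by
    rw [smul_eq_mul, smul_eq_mul]
    by_cases hx : |x| < 1 / 2
    · by_cases hy : |y| < 1 / 2
      · have : |a * x + b * y| < 1 / 2 := by
          simp only [abs_lt] at hx hy ⊢
          constructor <;> nlinarith
        simp [boxDensity_of_lt hx, boxDensity_of_lt hy, boxDensity_of_lt this]
      · simp [boxDensity_of_not_lt hy, hb]
    · simp [boxDensity_of_not_lt hx, ha]

lemma lintegral_gaussDensity : ∫⁻ s, gaussDensity s = 1 := by
  have hi : Integrable fun s : ℝ => Real.exp (-Real.pi * s ^ 2) :=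
    integrable_exp_neg_mul_sq Real.pi_pos
  unfold gaussDensity
  rw [← ofReal_integral_eq_lintegral_ofReal hi (ae_of_all _ fun _ => Real.exp_nonneg _),
    integral_gaussian, div_self Real.pi_ne_zero]
  simp

lemma gaussDensity_le_one (s : ℝ) : gaussDensity s ≤ 1 := by
  unfold gaussDensity
  rw [ENNReal.ofReal_le_one, Real.exp_le_one_iff]
  nlinarith [Real.pi_pos, sq_nonneg s]

/-- Both densities have mass `1` and `gaussDensity ≤ 1`, so passing from the Gaussian to the
interval moves mass from `|s| ≥ 1/2`, where `F ≤ F (1/2)`, to `|s| < 1/2`, where `F ≥ F (1/2)`. -/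
lemma lintegral_mul_gauss_le_mul_box {F : ℝ → ℝ≥0∞} (hF : Measurable F)
    (hdec : ∀ s t : ℝ, |s| ≤ |t| → F t ≤ F s) :
    ∫⁻ s, gaussDensity s * F s ≤ ∫⁻ s, boxDensity s * F s := by
  set I := {s : ℝ | |s| < 1 / 2} with hI
  have hIm : MeasurableSet I := measurableSet_box
  have hγ := evenLogConcave_gaussDensity.measurable
  have hvol : volume I = 1 := by
    have : I = Set.Ioo (-(1 / 2) : ℝ) (1 / 2) := by ext s; simp [hI, abs_lt]
    rw [this, Real.volume_Ioo]; norm_num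
  have hcompl : ∫⁻ s in I, (1 - gaussDensity s) = ∫⁻ s in Iᶜ, gaussDensity s := by
    have h1 : (∫⁻ s in I, gaussDensity s) + ∫⁻ s in I, (1 - gaussDensity s) = 1 := by
      rw [← lintegral_add_left hγ]
      simp only [add_tsub_cancel_of_le (gaussDensity_le_one _)]
      rw [setLIntegral_const, hvol, one_mul]
    have h2 := lintegral_add_compl gaussDensity hIm (μ := volume)
    rw [lintegral_gaussDensity] at h2
    have hfin : ∫⁻ s in I, gaussDensity s ≠ ∞ :=
      ne_top_of_le_ne_top ENNReal.one_ne_top (h1 ▸ le_self_add)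
    exact (ENNReal.add_right_inj hfin).mp (h1.trans h2.symm)
  have hbox : ∫⁻ s, boxDensity s * F s = ∫⁻ s in I, F s := by
    rw [← lintegral_indicator hIm]
    refine lintegral_congr fun s => ?_
    by_cases hs : s ∈ I
    · rw [boxDensity_of_lt hs, Set.indicator_of_mem hs, one_mul]
    · rw [boxDensity_of_not_lt hs, Set.indicator_of_notMem hs, zero_mul]
  rw [hbox, ← lintegral_add_compl (fun s => gaussDensity s * F s) hIm]
  have hin : ∫⁻ s in I, F s = (∫⁻ s in I, gaussDensity s * F s) +
      ∫⁻ s in I, (1 - gaussDensity s) * F s := by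
    rw [← lintegral_add_left (show Measurable fun s => gaussDensity s * F s from hγ.mul hF)]
    refine lintegral_congr fun s => ?_
    rw [← add_mul, add_tsub_cancel_of_le (gaussDensity_le_one s), one_mul]
  rw [hin]
  refine add_le_add_right ?_ _
  calc ∫⁻ s in Iᶜ, gaussDensity s * F s
      ≤ ∫⁻ s in Iᶜ, gaussDensity s * F (1 / 2) := by
        refine setLIntegral_mono (hγ.mul_const _) fun s hs => ?_
        refine mul_le_mul_right (hdec _ _ ?_) _
        rw [abs_of_pos (by norm_num : (0 : ℝ) < 1 / 2)]
        simpa [hI] using hs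
    _ = ∫⁻ s in I, (1 - gaussDensity s) * F (1 / 2) := by
        rw [lintegral_mul_const _ hγ, lintegral_mul_const _
          (show Measurable fun s => 1 - gaussDensity s from measurable_const.sub hγ), hcompl]
    _ ≤ _ := by
        refine setLIntegral_mono ((measurable_const.sub hγ).mul hF) fun s hs => ?_
        refine mul_le_mul_right (hdec _ _ ?_) _
        rw [abs_of_pos (by norm_num : (0 : ℝ) < 1 / 2)]
        exact le_of_lt hs

/-- Integrals of an even log-concave function over parallel hyperplane sections decrease with the
distance to the origin (Anderson): the section at `s` contains a convex combination of those at
`t` and `-t`, which have the same integral. -/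
lemma EvenLogConcave.marginal_antitone {k : ℕ} (j : Fin (k + 1)) {H : (Fin (k + 1) → ℝ) → ℝ≥0∞}
    (hH : EvenLogConcave H) {s t : ℝ} (hst : |s| ≤ |t|) :
    ∫⁻ w : Fin k → ℝ, H (j.insertNth t w) ≤ ∫⁻ w : Fin k → ℝ, H (j.insertNth s w) := by
  have hm : ∀ s : ℝ, Measurable fun w : Fin k → ℝ => H (j.insertNth s w) := fun s =>
    (hH.measurable.comp (measurable_insertNth j)).comp measurable_prodMk_left
  have heven : ∀ s : ℝ, ∫⁻ w : Fin k → ℝ, H (j.insertNth (-s) w) =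
      ∫⁻ w : Fin k → ℝ, H (j.insertNth s w) := by
    intro s
    rw [← (Measure.measurePreserving_neg (volume : Measure (Fin k → ℝ))).lintegral_comp (hm (-s))]
    refine lintegral_congr fun w => ?_
    rw [← hH.even]
    congr 1
    ext l
    refine Fin.succAboveCases j ?_ (fun i => ?_) l <;> simp
  rcases eq_or_lt_of_le hst with h | h
  · rcases abs_eq_abs.mp h with rfl | rfl
    · exact le_rfl
    · rw [heven]
  · -- `s = a t + b (-t)` with positive weights
    have ht : t ≠ 0 := by rintro rfl; simp at h; exact absurd h (not_lt.mpr (abs_nonneg s))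
    have hr : |s / t| < 1 := by rw [abs_div, div_lt_one (abs_pos.mpr ht)]; exact h
    rw [abs_lt] at hr
    have ha : 0 < (1 + s / t) / 2 := by linarith
    have hb : 0 < (1 - s / t) / 2 := by linarith
    have hab : (1 + s / t) / 2 + (1 - s / t) / 2 = 1 := by ring
    have hs : (1 + s / t) / 2 * t + (1 - s / t) / 2 * (-t) = s := by field_simp; ring
    have := prekopa_leindler (hm t) (hm (-t)) (hm s) ha hb hab (fun v w => by
      nth_rewrite 3 [← hs]
      rw [insertNth_combo]
      exact hH.le_combo ha hb hab _ _)
    rwa [heven, ← ENNReal.rpow_add_of_nonneg _ _ ha.le hb.le, hab, ENNReal.rpow_one] at this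

/-- Replacing one Gaussian factor by the indicator of the interval increases the integral. In
coordinates where `b ⬝ᵥ t` is one of the variables, the remaining factor integrates to a function
of that variable which is decreasing in its absolute value. -/
lemma lintegral_gauss_le_box {d : ℕ} (b : Fin d → ℝ) {H : (Fin d → ℝ) → ℝ≥0∞}
    (hH : EvenLogConcave H) :
    ∫⁻ t, gaussDensity (b ⬝ᵥ t) * H t ≤ ∫⁻ t, boxDensity (b ⬝ᵥ t) * H t := by
  by_cases hb : b = 0
  · simp [hb, gaussDensity, boxDensity]
  obtain ⟨j, hj⟩ : ∃ j, b j ≠ 0 := by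
    by_contra h; push Not at h; exact hb (funext h)
  obtain ⟨k, rfl⟩ : ∃ k, d = k + 1 := ⟨d - 1, by have := j.2; omega⟩
  -- a linear change of variables turning `b ⬝ᵥ t` into the `j`-th coordinate
  let T : (Fin (k + 1) → ℝ) →ₗ[ℝ] (Fin (k + 1) → ℝ) :=
    { toFun := fun t => Function.update t j (b ⬝ᵥ t)
      map_add' := fun x y => by
        ext l; by_cases hl : l = j
        · subst hl; simp [dotProduct_add]
        · simp [hl]
      map_smul' := fun c x => by
        ext l; by_cases hl : l = j
        · subst hl; simp [dotProduct_smul]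
        · simp [hl] }
  have hTj : ∀ t, T t j = b ⬝ᵥ t := fun t => by simp [T]
  have hTinj : Function.Injective T := by
    rw [← LinearMap.ker_eq_bot, LinearMap.ker_eq_bot']
    intro x hx
    have h1 : ∀ l, l ≠ j → x l = 0 := fun l hl => by
      have := congrFun hx l; simpa [T, hl] using this
    have h2 : b ⬝ᵥ x = 0 := by rw [← hTj, hx]; rfl
    have h3 : b ⬝ᵥ x = b j * x j := by
      rw [dotProduct, Finset.sum_eq_single j] <;> simp +contextual [h1]
    ext l
    by_cases hl : l = j
    · subst hl
      rw [h3] at h2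
      exact (mul_eq_zero.mp h2).resolve_left hj
    · exact h1 l hl
  let e := LinearEquiv.ofInjectiveEndo T hTinj
  have heT : ∀ t, e t = T t := fun t => rfl
  have hTm : Measurable T := T.continuous_of_finiteDimensional.measurable
  have hem : Measurable e.symm :=
    e.symm.toLinearMap.continuous_of_finiteDimensional.measurable
  have hdet : LinearMap.det T ≠ 0 := (LinearEquiv.isUnit_det' e).ne_zero
  have hH' : EvenLogConcave fun u => H (e.symm u) := hH.comp_linear e.symm.toLinearMap hem
  have key : ∀ ψ : ℝ → ℝ≥0∞, Measurable ψ → ∫⁻ t, ψ (b ⬝ᵥ t) * H t =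
      ENNReal.ofReal |(LinearMap.det T)⁻¹| *
        ∫⁻ s, ψ s * ∫⁻ w : Fin k → ℝ, H (e.symm (j.insertNth s w)) := by
    intro ψ hψ
    have hm : Measurable fun u : Fin (k + 1) → ℝ => ψ (u j) * H (e.symm u) :=
      (hψ.comp (measurable_pi_apply j)).mul hH'.measurable
    have h1 : ∫⁻ t, ψ (b ⬝ᵥ t) * H t = ∫⁻ t, (fun u => ψ (u j) * H (e.symm u)) (T t) := by
      refine lintegral_congr fun t => ?_
      simp only [hTj, ← heT, LinearEquiv.symm_apply_apply]
    rw [h1, ← lintegral_map hm hTm, Real.map_linearMap_volume_pi_eq_smul_volume_pi hdet,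
      lintegral_smul_measure, smul_eq_mul, lintegral_insertNth j hm]
    congr 1
    refine lintegral_congr fun s => ?_
    simp only [Fin.insertNth_apply_same]
    exact lintegral_const_mul _
      ((hH'.measurable.comp (measurable_insertNth j)).comp measurable_prodMk_left)
  rw [key _ evenLogConcave_gaussDensity.measurable, key _ evenLogConcave_boxDensity.measurable]
  refine mul_le_mul_right (lintegral_mul_gauss_le_mul_box ?_ fun s t hst =>
    hH'.marginal_antitone j hst) _
  exact (hH'.measurable.comp (measurable_insertNth j)).lintegral_prod_right'

/-- The Gaussian factors are replaced one at a time. -/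
lemma lintegral_prod_gauss_le_prod_box {d n : ℕ} (B : Fin n → Fin d → ℝ) :
    ∫⁻ t, ∏ i, gaussDensity (B i ⬝ᵥ t) ≤ ∫⁻ t, ∏ i, boxDensity (B i ⬝ᵥ t) := by
  classical
  let ψ : Finset (Fin n) → Fin n → ℝ → ℝ≥0∞ := fun s i => if i ∈ s then boxDensity else gaussDensity
  have hψ : ∀ s i, EvenLogConcave (ψ s i) := by
    intro s i
    by_cases h : i ∈ s
    · simpa [ψ, h] using evenLogConcave_boxDensity
    · simpa [ψ, h] using evenLogConcave_gaussDensity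
  have hψ' : ∀ s i, EvenLogConcave fun t : Fin d → ℝ => ψ s i (B i ⬝ᵥ t) := fun s i =>
    (hψ s i).comp_linear (dotProductBilin ℝ ℝ (B i)) (by
      change Measurable fun t => B i ⬝ᵥ t
      unfold dotProduct; fun_prop)
  suffices h : ∀ s : Finset (Fin n), ∫⁻ t, ∏ i, gaussDensity (B i ⬝ᵥ t) ≤
      ∫⁻ t, ∏ i, ψ s i (B i ⬝ᵥ t) by
    simpa [ψ] using h Finset.univ
  intro s
  induction s using Finset.induction_on with
  | empty => simp [ψ]
  | insert a s ha ih =>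
    refine ih.trans ?_
    have h := lintegral_gauss_le_box (B a)
      (EvenLogConcave.finsetProd (Finset.univ.erase a) fun i _ => hψ' s i)
    have e1 : ∀ t, ∏ i, ψ s i (B i ⬝ᵥ t) =
        gaussDensity (B a ⬝ᵥ t) * ∏ i ∈ Finset.univ.erase a, ψ s i (B i ⬝ᵥ t) := fun t => by
      rw [← Finset.mul_prod_erase _ _ (Finset.mem_univ a)]
      simp [ψ, ha]
    have e2 : ∀ t, ∏ i, ψ (insert a s) i (B i ⬝ᵥ t) =
        boxDensity (B a ⬝ᵥ t) * ∏ i ∈ Finset.univ.erase a, ψ s i (B i ⬝ᵥ t) := fun t => by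
      rw [← Finset.mul_prod_erase _ _ (Finset.mem_univ a)]
      congr 1
      · simp [ψ]
      · refine Finset.prod_congr rfl fun i hi => ?_
        simp [ψ, Finset.ne_of_mem_erase hi]
    simpa only [e1, e2] using h

open scoped MatrixOrder in
/-- The integrand is `exp (-π tᵀ Bᵀ B t)`, and `Bᵀ * B = Cᵀ * C` with `C` square and invertible,
so the substitution `u = C t` reduces the claim to the standard Gaussian integral. -/
lemma lintegral_prod_gauss {d n : ℕ} (B : Matrix (Fin n) (Fin d) ℝ) (hB : (Bᵀ * B).det ≠ 0) :
    ENNReal.ofReal (Real.sqrt (Bᵀ * B).det) * ∫⁻ t, ∏ i, gaussDensity (B i ⬝ᵥ t) = 1 := by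
  obtain ⟨C, hC⟩ : ∃ C : Matrix (Fin d) (Fin d) ℝ, Bᵀ * B = Cᵀ * C := by
    have h := posSemidef_conjTranspose_mul_self B
    rw [conjTranspose_eq_transpose_of_trivial] at h
    obtain ⟨C, hC⟩ := CStarAlgebra.nonneg_iff_eq_star_mul_self.mp h.nonneg
    refine ⟨C, ?_⟩
    rw [hC, star_eq_conjTranspose, conjTranspose_eq_transpose_of_trivial]
  have hdet : (Bᵀ * B).det = C.det ^ 2 := by rw [hC, det_mul, det_transpose, sq]
  have hC0 : C.det ≠ 0 := by
    intro h; rw [hdet, h] at hB; simp at hB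
  have hq : ∀ t, ∏ i, gaussDensity (B i ⬝ᵥ t) = ∏ i, gaussDensity ((C *ᵥ t) i) := by
    intro t
    have h1 : ∀ {k : ℕ} (v : Fin k → ℝ), ∏ i, gaussDensity (v i) =
        ENNReal.ofReal (Real.exp (-Real.pi * (v ⬝ᵥ v))) := by
      intro k v
      simp only [gaussDensity]
      rw [← ENNReal.ofReal_prod_of_nonneg fun i _ => Real.exp_nonneg _, ← Real.exp_sum,
        ← Finset.mul_sum]
      simp [dotProduct, sq]
    have h2 : ∀ {k : ℕ} (M : Matrix (Fin k) (Fin d) ℝ),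
        (M *ᵥ t) ⬝ᵥ (M *ᵥ t) = t ⬝ᵥ ((Mᵀ * M) *ᵥ t) := by
      intro k M
      rw [← mulVec_mulVec, dotProduct_mulVec, ← mulVec_transpose,
        dotProduct_comm]
    have h3 := h1 (B *ᵥ t)
    rw [h2, hC, ← h2, ← h1] at h3
    exact h3
  have hm : Measurable fun u : Fin d → ℝ => ∏ i, gaussDensity (u i) :=
    Finset.measurable_fun_prod _ fun i _ =>
      evenLogConcave_gaussDensity.measurable.comp (measurable_pi_apply i)
  have hdet' : LinearMap.det (toLin' C) ≠ 0 := by rwa [LinearMap.det_toLin']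
  have hmap : ∫⁻ t, ∏ i, gaussDensity ((C *ᵥ t) i) =
      ENNReal.ofReal |C.det⁻¹| * ∫⁻ u : Fin d → ℝ, ∏ i, gaussDensity (u i) := by
    have := lintegral_map hm (toLin' C).continuous_of_finiteDimensional.measurable (μ := volume)
    rw [Real.map_linearMap_volume_pi_eq_smul_volume_pi hdet', lintegral_smul_measure,
      LinearMap.det_toLin'] at this
    exact this.symm
  have hone : ∫⁻ u : Fin d → ℝ, ∏ i, gaussDensity (u i) = 1 := by
    clear hmap hm hdet' hq hC0 hdet hC C hB B
    induction d with
    | zero => rw [volume_pi, Measure.pi_of_empty, lintegral_dirac]; simp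
    | succ d ih =>
      have hm : ∀ d : ℕ, Measurable fun u : Fin d → ℝ => ∏ i, gaussDensity (u i) := fun d =>
        Finset.measurable_fun_prod _ fun i _ =>
          evenLogConcave_gaussDensity.measurable.comp (measurable_pi_apply i)
      rw [lintegral_insertNth 0 (hm (d + 1))]
      have : ∀ s : ℝ, ∫⁻ w : Fin d → ℝ, ∏ i, gaussDensity
          ((Fin.insertNth 0 s w : Fin (d + 1) → ℝ) i) = gaussDensity s := by
        intro s
        simp only [Fin.prod_univ_succ, Fin.insertNth_zero', Fin.cons_zero, Fin.cons_succ]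
        rw [lintegral_const_mul _ (hm d), ih, mul_one]
      simp only [this, lintegral_gaussDensity]
  rw [lintegral_congr hq, hmap, hone, mul_one, hdet, Real.sqrt_sq_eq_abs, abs_inv,
    ENNReal.ofReal_inv_of_pos (abs_pos.mpr hC0)]
  exact ENNReal.mul_inv_cancel (by simpa using hC0) ENNReal.ofReal_ne_top

/-- Vaaler's theorem: a section of the unit cube by a linear subspace has volume at least `1`. The
subspace is the column space of `B`, and its volume is expressed in the coordinates `t`. -/
lemma one_le_sqrt_det_mul_volume {d n : ℕ} (B : Matrix (Fin n) (Fin d) ℝ)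
    (hB : (Bᵀ * B).det ≠ 0) :
    1 ≤ ENNReal.ofReal (Real.sqrt (Bᵀ * B).det) *
      volume {t : Fin d → ℝ | ∀ i, |(B *ᵥ t) i| < 1 / 2} := by
  rw [← lintegral_prod_gauss B hB]
  refine mul_le_mul_right ((lintegral_prod_gauss_le_prod_box B).trans (le_of_eq ?_)) _
  have hm : MeasurableSet {t : Fin d → ℝ | ∀ i, |(B *ᵥ t) i| < 1 / 2} := by
    simp only [Set.ofPred_forall]
    refine MeasurableSet.iInter fun i => measurableSet_lt ?_ measurable_const
    simp only [mulVec, dotProduct]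
    fun_prop
  rw [← lintegral_indicator_one hm]
  refine lintegral_congr fun t => ?_
  by_cases ht : t ∈ {t : Fin d → ℝ | ∀ i, |(B *ᵥ t) i| < 1 / 2}
  · rw [Set.indicator_of_mem ht]
    exact Finset.prod_eq_one fun i _ => boxDensity_of_lt (ht i)
  · rw [Set.indicator_of_notMem ht]
    simp only [Set.mem_ofPred_eq, not_forall] at ht
    obtain ⟨i, hi⟩ := ht
    exact Finset.prod_eq_zero (Finset.mem_univ i) (boxDensity_of_not_lt hi)

end CubeSections

/-! ### Minkowski's second theorem -/

section Minkowski

open MeasureTheory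
open scoped Pointwise

/-- If a translate of `Q` is contained in `Q'`, the image of `Q` in the torus `ℝ^ι / ℤ^ι` has at most
the volume of the image of `Q'`. -/
lemma volume_mod_lattice_le {ι : Type*} [Fintype ι] {Q Q' : Set (ι → ℝ)}
    (hQ' : IsOpen Q') (v : ι → ℝ) (h : ∀ x ∈ Q, x + v ∈ Q') :
    volume {u : ι → ℝ | (∀ j, u j ∈ Set.Ico (0 : ℝ) 1) ∧ ∃ z : ι → ℤ, u + (fun j => (z j : ℝ)) ∈ Q} ≤
    volume {u : ι → ℝ | (∀ j, u j ∈ Set.Ico (0 : ℝ) 1) ∧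
      ∃ z : ι → ℤ, u + (fun j => (z j : ℝ)) ∈ Q'} := by
  classical
  let b := Pi.basisFun ℝ ι
  have hb : ∀ x : ι → ℝ, x ∈ ZSpan.fundamentalDomain b ↔ ∀ j, x j ∈ Set.Ico (0 : ℝ) 1 := by
    intro x; rw [ZSpan.mem_fundamentalDomain]; simp [b]
  let G := (Submodule.span ℤ (Set.range b)).toAddSubgroup
  have hG : ∀ g : ι → ℝ, g ∈ G ↔ ∃ z : ι → ℤ, g = fun j => (z j : ℝ) := by
    intro g
    simp only [G]
    rw [Submodule.mem_toAddSubgroup, Module.Basis.mem_span_iff_repr_mem]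
    simp only [b, Pi.basisFun_repr, Set.mem_range, algebraMap_int_eq, eq_intCast]
    constructor
    · intro h; choose z hz using h; exact ⟨z, funext fun j => (hz j).symm⟩
    · rintro ⟨z, rfl⟩ i; exact ⟨z i, rfl⟩
  let P : Set (ι → ℝ) → Set (ι → ℝ) := fun S => {u | ∃ z : ι → ℤ, u + (fun j => (z j : ℝ)) ∈ S}
  have hPo : ∀ S, IsOpen S → IsOpen (P S) := by
    intro S hS
    have : P S = ⋃ z : ι → ℤ, (fun u => u + (fun j => (z j : ℝ))) ⁻¹' S := by
      ext u; simp [P]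
    rw [this]
    exact isOpen_iUnion fun z => hS.preimage (by fun_prop)
  have hinv : ∀ S, ∀ g : G, (fun x => g +ᵥ x) ⁻¹' (P S) = P S := by
    rintro S ⟨g, hg⟩
    obtain ⟨w, rfl⟩ := (hG g).mp hg
    ext u
    simp only [P, Set.mem_preimage, Set.mem_ofPred_eq, AddSubgroup.vadd_def, vadd_eq_add]
    constructor
    · rintro ⟨z, hz⟩
      refine ⟨w + z, ?_⟩
      convert hz using 1
      ext j; simp; ring
    · rintro ⟨z, hz⟩
      refine ⟨z - w, ?_⟩
      convert hz using 1
      ext j; simp; ring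
  have : Countable G := by
    let φ : (ι → ℤ) → G := fun z => ⟨fun j => (z j : ℝ), (hG _).mpr ⟨z, rfl⟩⟩
    refine Function.Surjective.countable (f := φ) ?_
    rintro ⟨g, hg⟩
    obtain ⟨z, rfl⟩ := (hG g).mp hg
    exact ⟨z, rfl⟩
  have hF := ZSpan.isAddFundamentalDomain' b (volume : Measure (ι → ℝ))
  have hF' := hF.vadd_of_comm v
  have e : volume (P Q' ∩ ZSpan.fundamentalDomain b) =
      volume (P Q' ∩ (v +ᵥ ZSpan.fundamentalDomain b)) :=
    hF.measure_set_eq hF' (hPo _ hQ').measurableSet (hinv Q')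
  have e2 : ∀ S, {u : ι → ℝ | (∀ j, u j ∈ Set.Ico (0 : ℝ) 1) ∧
      ∃ z : ι → ℤ, u + (fun j => (z j : ℝ)) ∈ S} = P S ∩ ZSpan.fundamentalDomain b := by
    intro S; ext u
    simp only [Set.mem_ofPred_eq, Set.mem_inter_iff, hb, P]; tauto
  rw [e2, e2, e]
  calc volume (P Q ∩ ZSpan.fundamentalDomain b)
      = volume (v +ᵥ (P Q ∩ ZSpan.fundamentalDomain b)) := (measure_vadd volume v _).symm
    _ ≤ _ := measure_mono ?_
  rw [Set.vadd_set_inter]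
  refine Set.inter_subset_inter_left _ ?_
  rintro _ ⟨u, ⟨z, hz⟩, rfl⟩
  refine ⟨z, ?_⟩
  convert h _ hz using 1
  ext j; simp; ring

/-- The image of `S` in the quotient of `ℝ^d` by the lattice `ℤ^i × 0`, represented in the
fundamental domain `[0, 1)^i × ℝ^(d - i)`. -/
def reduceMod (d i : ℕ) (S : Set (Fin d → ℝ)) : Set (Fin d → ℝ) :=
  {x | (∀ j : Fin d, (j : ℕ) < i → x j ∈ Set.Ico (0 : ℝ) 1) ∧
    ∃ z : Fin d → ℤ, (∀ j : Fin d, i ≤ j → z j = 0) ∧ x + (fun j => (z j : ℝ)) ∈ S}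

lemma measurableSet_reduceMod (d i : ℕ) {S : Set (Fin d → ℝ)} (hS : IsOpen S) :
    MeasurableSet (reduceMod d i S) := by
  have : reduceMod d i S = {x | ∀ j : Fin d, (j : ℕ) < i → x j ∈ Set.Ico (0 : ℝ) 1} ∩
      ⋃ z ∈ {z : Fin d → ℤ | ∀ j : Fin d, i ≤ j → z j = 0},
        (fun x => x + (fun j => (z j : ℝ))) ⁻¹' S := by
    ext x; simp [reduceMod]
  rw [this]
  refine MeasurableSet.inter ?_ (isOpen_biUnion fun z _ => hS.preimage (by fun_prop)).measurableSet
  simp only [Set.ofPred_forall]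
  exact MeasurableSet.iInter fun j => MeasurableSet.iInter fun _ =>
    measurableSet_Ico.preimage (measurable_pi_apply j)

/-- If differences of points of `S` that are integer vectors have vanishing `i`-th coordinate, nothing
is lost by reducing modulo `1` in that coordinate as well: the unit slabs of `S` in direction `i`
have disjoint images. -/
lemma volume_reduceMod_succ {d i : ℕ} (hi : i < d) {S : Set (Fin d → ℝ)} (hS : IsOpen S)
    (hsep : ∀ x ∈ S, ∀ y ∈ S, ∀ z : Fin d → ℤ, x - y = (fun j => (z j : ℝ)) → z ⟨i, hi⟩ = 0) :
    volume (reduceMod d i S) ≤ volume (reduceMod d (i + 1) S) := by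
  let e : ℤ → (Fin d → ℝ) := fun k => Pi.single ⟨i, hi⟩ (k : ℝ)
  let C : ℤ → Set (Fin d → ℝ) := fun k => reduceMod d i S ∩ {x | ⌊x ⟨i, hi⟩⌋ = k}
  have hCm : ∀ k, MeasurableSet (C k) := fun k =>
    (measurableSet_reduceMod d i hS).inter
      ((measurableSet_singleton k).preimage (Int.measurable_floor.comp (measurable_pi_apply _)))
  have hcov : reduceMod d i S = ⋃ k, C k := by
    ext x; simp [C]
  have hsub : ∀ k, (fun x => x + e k) ⁻¹' C k ⊆ reduceMod d (i + 1) S := by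
    rintro k x ⟨⟨hx1, z, hz, hxS⟩, hk⟩
    simp only [Set.mem_ofPred_eq] at hk
    refine ⟨fun j hj => ?_, z + Pi.single ⟨i, hi⟩ k, fun j hj => ?_, ?_⟩
    · rcases Nat.lt_succ_iff_lt_or_eq.mp hj with h | h
      · have := hx1 j h
        have hne : j ≠ ⟨i, hi⟩ := by rintro rfl; simp at h
        simpa [e, Pi.single_apply, hne] using this
      · have hj' : j = ⟨i, hi⟩ := Fin.ext h
        subst hj'
        rw [Int.floor_eq_iff] at hk
        simp only [e, Pi.add_apply, Pi.single_eq_same] at hk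
        exact ⟨by linarith, by linarith⟩
    · have hne : j ≠ ⟨i, hi⟩ := by rintro rfl; simp at hj
      simp [hne, hz j (by omega)]
    · convert hxS using 1
      ext j
      by_cases hj : j = ⟨i, hi⟩
      · subst hj; simp [e]; ring
      · simp [e, hj]
  have hdisj : Pairwise (Function.onFun Disjoint fun k => (fun x => x + e k) ⁻¹' C k) := by
    intro k k' hkk'
    refine Set.disjoint_left.mpr ?_
    rintro x ⟨⟨-, z, hz, hxS⟩, -⟩ ⟨⟨-, z', hz', hxS'⟩, -⟩
    have := hsep _ hxS _ hxS' (z + Pi.single ⟨i, hi⟩ k - (z' + Pi.single ⟨i, hi⟩ k')) (by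
      ext j
      by_cases hj : j = ⟨i, hi⟩
      · subst hj; simp [e]; ring
      · simp [e, hj])
    simp [hz ⟨i, hi⟩ le_rfl, hz' ⟨i, hi⟩ le_rfl] at this
    exact hkk' (by linarith)
  calc volume (reduceMod d i S) ≤ ∑' k, volume (C k) := by
        rw [hcov]; exact measure_iUnion_le _
    _ = ∑' k, volume ((fun x => x + e k) ⁻¹' C k) := by
        simp only [measure_preimage_add_right]
    _ = volume (⋃ k, (fun x => x + e k) ⁻¹' C k) :=
        (measure_iUnion hdisj fun k => (hCm k).preimage (measurable_add_const _)).symm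
    _ ≤ _ := measure_mono (Set.iUnion_subset hsub)

/-- Dilating a convex body by `c ≥ 1` multiplies the volume of its image by at least `c ^ (d - i)`.
Over a point `y` of the last `d - i` coordinates, the fibre of the dilated body at `c y` contains a
translate of the fibre of the original body at `y`. -/
lemma volume_reduceMod_scale {d i : ℕ} (hi : i ≤ d) (p : Seminorm ℝ (Fin d → ℝ))
    (hp : Continuous p) {a c : ℝ} (hc : 1 ≤ c) :
    ENNReal.ofReal (c ^ (d - i)) * volume (reduceMod d i {x | p x < a}) ≤
      volume (reduceMod d i {x | p x < c * a}) := by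
  have hc0 : 0 < c := by linarith
  have hop : ∀ a, IsOpen {x | p x < a} := fun a => isOpen_lt hp continuous_const
  let P : Fin d → Prop := fun j => (j : ℕ) < i
  let E := MeasurableEquiv.piEquivPiSubtypeProd (fun _ : Fin d => ℝ) P
  have hE : MeasurePreserving E volume volume :=
    volume_preserving_piEquivPiSubtypeProd (fun _ : Fin d => ℝ) P
  have hEs : MeasurePreserving E.symm volume volume := hE.symm E
  -- fibres over the last `d - i` coordinates
  let R : ℝ → ({j // ¬ P j} → ℝ) → Set ({j // P j} → ℝ) := fun a y =>
    {u | (∀ j, u j ∈ Set.Ico (0 : ℝ) 1) ∧ ∃ z : {j // P j} → ℤ,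
      u + (fun j => (z j : ℝ)) ∈ {w | p (E.symm (w, y)) < a}}
  have hEl : ∀ w w' y y', E.symm (w, y) + E.symm (w', y') = E.symm (w + w', y + y') := by
    intro w w' y y'
    ext j
    by_cases hj : P j <;> simp [E, MeasurableEquiv.piEquivPiSubtypeProd,
      Equiv.piEquivPiSubtypeProd, hj]
  have hEsm : ∀ (s : ℝ) w y, s • E.symm (w, y) = E.symm (s • w, s • y) := by
    intro s w y
    ext j
    by_cases hj : P j <;> simp [E, MeasurableEquiv.piEquivPiSubtypeProd,
      Equiv.piEquivPiSubtypeProd, hj]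
  have hEc : Continuous fun q : ({j // P j} → ℝ) × ({j // ¬ P j} → ℝ) => E.symm q := by
    refine continuous_pi fun j => ?_
    by_cases hj : P j
    · simp only [E, MeasurableEquiv.piEquivPiSubtypeProd, Equiv.piEquivPiSubtypeProd,
        MeasurableEquiv.symm_mk, MeasurableEquiv.coe_mk, Equiv.coe_fn_symm_mk, hj, dif_pos]
      fun_prop
    · simp only [E, MeasurableEquiv.piEquivPiSubtypeProd, Equiv.piEquivPiSubtypeProd,
        MeasurableEquiv.symm_mk, MeasurableEquiv.coe_mk, Equiv.coe_fn_symm_mk, hj, dif_neg,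
        not_false_eq_true]
      fun_prop
  have hset : ∀ a y, (fun u => (u, y)) ⁻¹' (E.symm ⁻¹' reduceMod d i {x | p x < a}) = R a y := by
    intro a y
    ext u
    simp only [Set.mem_preimage, reduceMod, Set.mem_ofPred_eq, R]
    have hval : ∀ j (hj : P j), E.symm (u, y) j = u ⟨j, hj⟩ := by
      intro j hj
      simp [E, MeasurableEquiv.piEquivPiSubtypeProd, Equiv.piEquivPiSubtypeProd, hj]
    constructor
    · rintro ⟨h1, z, hz, h2⟩
      refine ⟨fun j => by rw [← hval j.1 j.2]; exact h1 j.1 j.2, fun j => z j, ?_⟩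
      convert h2 using 2
      have := hEl u (fun j => (z j : ℝ)) y 0
      rw [add_zero] at this
      rw [← this]
      congr 1
      ext j
      by_cases hj : P j
      · simp [E, MeasurableEquiv.piEquivPiSubtypeProd, Equiv.piEquivPiSubtypeProd, hj]
      · simp [E, MeasurableEquiv.piEquivPiSubtypeProd, Equiv.piEquivPiSubtypeProd, hj,
          hz j (not_lt.mp hj)]
    · rintro ⟨h1, z, h2⟩
      refine ⟨fun j hj => by rw [hval j hj]; exact h1 _, fun j => if hj : P j then z ⟨j, hj⟩ else 0,
        fun j hj => dif_neg (not_lt.mpr hj), ?_⟩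
      convert h2 using 2
      have := hEl u (fun j => (z j : ℝ)) y 0
      rw [add_zero] at this
      rw [← this]
      congr 1
      ext j
      by_cases hj : P j
      · simp [E, MeasurableEquiv.piEquivPiSubtypeProd, Equiv.piEquivPiSubtypeProd, hj]
      · simp [E, MeasurableEquiv.piEquivPiSubtypeProd, Equiv.piEquivPiSubtypeProd, hj]
  have hfib : ∀ a, volume (reduceMod d i {x | p x < a}) = ∫⁻ y, volume (R a y) := by
    intro a
    have hm := measurableSet_reduceMod d i (hop a)
    rw [← hEs.measure_preimage hm.nullMeasurableSet, Measure.volume_eq_prod,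
      Measure.prod_apply_symm (hm.preimage E.symm.measurable)]
    exact lintegral_congr fun y => by rw [hset]
  have hle : ∀ y, volume (R a y) ≤ volume (R (c * a) (c • y)) := by
    intro y
    by_cases hne : ∃ w, p (E.symm (w, y)) < a
    · obtain ⟨w, hw⟩ := hne
      refine volume_mod_lattice_le
        ((hop (c * a)).preimage (hEc.comp (by fun_prop : Continuous fun w => (w, c • y))))
        ((c - 1) • w) fun x hx => ?_
      change p _ < _ at hx
      change p _ < _
      have e1 : E.symm (x + (c - 1) • w, c • y) = E.symm (x, y) + (c - 1) • E.symm (w, y) := by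
        rw [hEsm, hEl]
        congr 2
        module
      rw [e1]
      have h1 := map_add_le_add p (E.symm (x, y)) ((c - 1) • E.symm (w, y))
      have h2 : p ((c - 1) • E.symm (w, y)) = (c - 1) * p (E.symm (w, y)) := by
        rw [map_smul_eq_mul, Real.norm_of_nonneg (by linarith)]
      have h3 : (c - 1) * p (E.symm (w, y)) ≤ (c - 1) * a :=
        mul_le_mul_of_nonneg_left hw.le (by linarith)
      linarith
    · have : R a y = ∅ := by
        rw [Set.eq_empty_iff_forall_notMem]
        rintro u ⟨-, z, hz⟩
        exact hne ⟨_, hz⟩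
      rw [this]; simp
  have hcard : Module.finrank ℝ ({j // ¬ P j} → ℝ) = d - i := by
    rw [Module.finrank_fintype_fun_eq_card, Fintype.card_subtype_compl]
    have : Fintype.card {j : Fin d // P j} = i := by
      rw [Fintype.card_subtype]
      have := Fin.card_filter_val_lt (n := d) (m := i)
      simp only [P]
      rw [this]; omega
    rw [this]; simp
  have hmeas : Measurable fun y => volume (R (c * a) y) := by
    have hm := measurableSet_reduceMod d i (hop (c * a))
    have := measurable_measure_prodMk_right (μ := (volume : Measure ({j // P j} → ℝ)))
      (hm.preimage E.symm.measurable)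
    simpa only [hset] using this
  rw [hfib, hfib]
  calc ENNReal.ofReal (c ^ (d - i)) * ∫⁻ y, volume (R a y)
      ≤ ENNReal.ofReal (c ^ (d - i)) * ∫⁻ y, volume (R (c * a) (c • y)) := by
        exact mul_le_mul_right (lintegral_mono hle) _
    _ = ENNReal.ofReal (c ^ (d - i)) *
        ∫⁻ y, volume (R (c * a) y) ∂(Measure.map (fun y => c • y) volume) := by
        rw [lintegral_map hmeas (measurable_const_smul c)]
    _ = _ := by
        rw [Measure.map_addHaar_smul _ hc0.ne', lintegral_smul_measure, hcard, smul_eq_mul,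
          ← mul_assoc, ← ENNReal.ofReal_mul (by positivity), abs_of_nonneg (by positivity),
          mul_inv_cancel₀ (by positivity)]
        simp

/-- Minkowski's second theorem. The hypothesis on `L` says that integer points with `p t < L i` lie
in the span of the first `i` basis vectors. Going from `L i / 2` to `L (i + 1) / 2` and reducing
modulo one more coordinate, the image of the body grows at least as much as the bound, and in the
end it lies in the unit cube. -/
lemma minkowski_second {d : ℕ} (p : Seminorm ℝ (Fin d → ℝ)) (hp : Continuous p)
    (L : ℕ → ℝ) (hpos : ∀ i, 0 < L i) (hmono : ∀ i, L i ≤ L (i + 1))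
    (hL : ∀ (t : Fin d → ℤ) (i : ℕ), i < d → p (fun j => (t j : ℝ)) < L i →
      ∀ j : Fin d, i ≤ j → t j = 0) :
    ENNReal.ofReal (∏ i ∈ Finset.range d, L i) * volume {x | p x < 1 / 2} ≤ 1 := by
  have hop : ∀ a, IsOpen {x | p x < a} := fun a => isOpen_lt hp continuous_const
  have hstep : ∀ i, i < d → volume (reduceMod d i {x | p x < L i / 2}) ≤
      volume (reduceMod d (i + 1) {x | p x < L i / 2}) := by
    intro i hi
    refine volume_reduceMod_succ hi (hop _) fun x hx y hy z hz => hL z i hi ?_ _ le_rfl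
    rw [← hz]
    have := map_sub_le_add p x y
    simp only [Set.mem_ofPred_eq] at hx hy
    linarith
  have hscale : ∀ i j, L i ≤ L j → ∀ k, k ≤ d →
      ENNReal.ofReal ((L j / L i) ^ (d - k)) * volume (reduceMod d k {x | p x < L i / 2}) ≤
        volume (reduceMod d k {x | p x < L j / 2}) := by
    intro i j hij k hk
    have := volume_reduceMod_scale hk p hp (a := L i / 2) ((one_le_div (hpos i)).mpr hij)
    have e : L j / L i * (L i / 2) = L j / 2 := by have := (hpos i).ne'; field_simp
    rwa [e] at this
  have hzero : ∀ S, reduceMod d 0 S = S := by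
    intro S; ext x
    simp only [reduceMod, Set.mem_ofPred_eq, Nat.not_lt_zero, false_imp_iff, implies_true, true_and,
      Nat.zero_le, true_imp_iff]
    constructor
    · rintro ⟨z, hz, h⟩
      convert h using 1
      ext j; simp [hz j]
    · intro h; exact ⟨0, by simp, by convert h using 1; ext j; simp⟩
  have hmain : ∀ i, i ≤ d → ENNReal.ofReal ((∏ k ∈ Finset.range i, L k) * L i ^ (d - i)) *
      volume {x | p x < 1 / 2} ≤ volume (reduceMod d i {x | p x < L i / 2}) := by
    intro i
    induction i with
    | zero =>
      intro _
      rw [hzero]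
      have e : {x | p x < L 0 / 2} = (fun x => (L 0)⁻¹ • x) ⁻¹' {x | p x < 1 / 2} := by
        ext x
        have h0 := hpos 0
        simp only [Set.mem_preimage, Set.mem_ofPred_eq, map_smul_eq_mul, norm_inv,
          Real.norm_of_nonneg h0.le]
        rw [inv_mul_lt_iff₀ h0, mul_one_div]
      rw [e, Measure.addHaar_preimage_smul _ (inv_ne_zero (hpos 0).ne')]
      have h0 := hpos 0
      simp [abs_of_pos h0]
    | succ i ih =>
      intro hi
      have h0 := hpos i
      have h0' := hpos (i + 1)
      calc _ = ENNReal.ofReal ((L (i + 1) / L i) ^ (d - (i + 1))) *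
            (ENNReal.ofReal ((∏ k ∈ Finset.range i, L k) * L i ^ (d - i)) *
              volume {x | p x < 1 / 2}) := by
            rw [← mul_assoc, ← ENNReal.ofReal_mul (by positivity)]
            congr 2
            rw [Finset.prod_range_succ, show d - i = (d - (i + 1)) + 1 by omega, pow_succ, div_pow]
            field_simp
        _ ≤ ENNReal.ofReal ((L (i + 1) / L i) ^ (d - (i + 1))) *
            volume (reduceMod d (i + 1) {x | p x < L i / 2}) :=
            mul_le_mul_right ((ih (by omega)).trans (hstep i hi)) _
        _ ≤ _ := hscale i (i + 1) (hmono i) _ hi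
  have hlast : volume (reduceMod d d {x | p x < L d / 2}) ≤ 1 := by
    calc _ ≤ volume (Set.univ.pi fun _ : Fin d => Set.Ico (0 : ℝ) 1) :=
          measure_mono fun x hx j _ => hx.1 j j.2
      _ = 1 := by rw [Real.volume_pi_Ico]; simp
  have := (hmain d le_rfl).trans hlast
  simpa using this

end Minkowski

/-! ### Small vectors in the kernel lattice -/

section KernelLattice

open MeasureTheory

lemma det_gram_ne_zero {n d : ℕ} (B : Matrix (Fin n) (Fin d) ℤ)
    (hB : ∀ v, B *ᵥ v = 0 → v = 0) : (Bᵀ * B).det ≠ 0 := by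
  intro h
  obtain ⟨v, hv, hv0⟩ := exists_mulVec_eq_zero_iff.mpr h
  refine hv (hB v ?_)
  rw [← dotProduct_self_eq_zero, dotProduct_mulVec, ← mulVec_transpose, mulVec_mulVec, hv0,
    zero_dotProduct]

/-- The column lattice of `B` contains linearly independent vectors whose sup norms have product at
most its covolume: Minkowski's second theorem for the section of the cube, whose volume is bounded
below by Vaaler's theorem. -/
lemma exists_small_independent_columns {n d : ℕ} (hd : 0 < d) (B : Matrix (Fin n) (Fin d) ℤ)
    (hB : ∀ v, B *ᵥ v = 0 → v = 0) :
    ∃ Z : Matrix (Fin d) (Fin d) ℤ, Z.det ≠ 0 ∧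
      ((∏ l, (Finset.univ.sup fun i => ((B *ᵥ Z l) i).natAbs) : ℕ) : ℝ) ≤
        Real.sqrt ((Bᵀ * B).det : ℝ) := by
  let ν : (Fin d → ℤ) → ℕ := fun v => Finset.univ.sup fun i => ((B *ᵥ v) i).natAbs
  obtain ⟨Z, W, hZ, hW, hmono, hmin⟩ := exists_minimal_system ν
  refine ⟨Z, hZ, ?_⟩
  let B' : Matrix (Fin n) (Fin d) ℝ := (B * Wᵀ).map (Int.castRingHom ℝ)
  -- a unimodular change of basis does not change the Gram determinant
  have hdet : (B'ᵀ * B').det = (((Bᵀ * B).det : ℤ) : ℝ) := by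
    have h1 : ((B * Wᵀ)ᵀ * (B * Wᵀ)).det = (Bᵀ * B).det := by
      rw [transpose_mul, transpose_transpose, Matrix.mul_assoc, ← Matrix.mul_assoc Bᵀ,
        ← Matrix.mul_assoc, det_mul, det_mul, det_transpose]
      rcases Int.isUnit_iff.mp hW with h | h <;> rw [h] <;> ring
    rw [← h1]
    have := RingHom.map_det (Int.castRingHom ℝ) ((B * Wᵀ)ᵀ * (B * Wᵀ))
    rw [RingHom.mapMatrix_apply, Matrix.map_mul] at this
    exact this.symm
  have hdet0 : (B'ᵀ * B').det ≠ 0 := by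
    rw [hdet]; exact_mod_cast det_gram_ne_zero B hB
  let p : Seminorm ℝ (Fin d → ℝ) := (normSeminorm ℝ (Fin n → ℝ)).comp (toLin' B')
  have hpx : ∀ x, p x = ‖B' *ᵥ x‖ := fun x => rfl
  have hp : Continuous p :=
    continuous_norm.comp (toLin' B').continuous_of_finiteDimensional
  have hpt : ∀ t : Fin d → ℤ, p (fun j => (t j : ℝ)) = ν (t ᵥ* W) := by
    intro t
    have e : B' *ᵥ (fun j => (t j : ℝ)) = fun i => (((B *ᵥ (t ᵥ* W)) i : ℤ) : ℝ) := by
      ext i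
      rw [← mulVec_transpose, mulVec_mulVec]
      exact ((Int.castRingHom ℝ).map_mulVec (B * Wᵀ) t i).symm
    rw [hpx, e]
    refine le_antisymm ((pi_norm_le_iff_of_nonneg (Nat.cast_nonneg _)).mpr fun i => ?_) ?_
    · rw [Int.norm_cast_real, Int.norm_eq_abs, ← Int.cast_abs, Int.abs_eq_natAbs, Int.cast_natCast]
      exact_mod_cast Finset.le_sup (f := fun i => ((B *ᵥ (t ᵥ* W)) i).natAbs) (Finset.mem_univ i)
    · have : ∀ s : ℝ, 0 ≤ s → (∀ i, ((((B *ᵥ (t ᵥ* W)) i).natAbs : ℕ) : ℝ) ≤ s) →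
          (ν (t ᵥ* W) : ℝ) ≤ s := by
        intro s hs h
        have : ν (t ᵥ* W) ≤ ⌊s⌋₊ := Finset.sup_le fun i _ => Nat.le_floor (h i)
        exact (Nat.le_floor_iff hs).mp this
      refine this _ (norm_nonneg _) fun i => le_trans (le_of_eq ?_) (norm_le_pi_norm _ i)
      rw [Int.norm_cast_real, Int.norm_eq_abs, ← Int.cast_abs, Int.abs_eq_natAbs, Int.cast_natCast]
  have hνpos : ∀ i, 0 < ν (Z i) := by
    intro i
    rw [Nat.pos_iff_ne_zero]
    intro h
    have h0 : B *ᵥ Z i = 0 := by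
      ext l
      have := Finset.le_sup (f := fun l => ((B *ᵥ Z i) l).natAbs) (Finset.mem_univ l)
      rw [show (Finset.univ.sup fun l => ((B *ᵥ Z i) l).natAbs) = 0 from h] at this
      simpa using this
    exact hZ (det_eq_zero_of_row_eq_zero i fun j => congrFun (hB _ h0) j)
  -- the successive minima, continued by their last value beyond the dimension
  let L : ℕ → ℝ := fun i => ν (Z ⟨min i (d - 1), by omega⟩)
  have h1 := minkowski_second p hp L (fun i => Nat.cast_pos.mpr (hνpos _))
    (fun i => by
      have : (⟨min i (d - 1), by omega⟩ : Fin d) ≤ ⟨min (i + 1) (d - 1), by omega⟩ := by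
        rw [Fin.mk_le_mk]; omega
      exact Nat.cast_le.mpr (hmono this))
    (fun t i hi hlt j hij => by
      rw [hpt] at hlt
      have e : (⟨min i (d - 1), by omega⟩ : Fin d) = ⟨i, hi⟩ := Fin.ext (by simp; omega)
      simp only [L, e] at hlt
      exact hmin t ⟨i, hi⟩ (by exact_mod_cast hlt) j hij)
  have h2 := one_le_sqrt_det_mul_volume B' hdet0
  have hset : {x | p x < 1 / 2} = {t : Fin d → ℝ | ∀ i, |(B' *ᵥ t) i| < 1 / 2} := by
    ext x
    simp only [Set.mem_ofPred_eq, hpx]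
    rw [pi_norm_lt_iff (by norm_num)]
    rfl
  rw [hset] at h1
  have hprod : ∏ i ∈ Finset.range d, L i = ((∏ l, ν (Z l) : ℕ) : ℝ) := by
    rw [Finset.prod_range, Nat.cast_prod]
    refine Finset.prod_congr rfl fun i _ => ?_
    have e : (⟨min i (d - 1), by omega⟩ : Fin d) = i := Fin.ext (by simp; omega)
    simp only [L, e]
  rw [hprod] at h1
  rw [hdet] at h2
  set V := volume {t : Fin d → ℝ | ∀ i, |(B' *ᵥ t) i| < 1 / 2} with hV
  change ((∏ l, ν (Z l) : ℕ) : ℝ) ≤ _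
  have hpos : 0 < ((∏ l, ν (Z l) : ℕ) : ℝ) := by
    exact_mod_cast Finset.prod_pos fun i _ => hνpos i
  have hV0 : V ≠ 0 := by
    intro h; rw [h, mul_zero] at h2; simp at h2
  have hVt : V ≠ ⊤ := by
    intro h
    rw [h, ENNReal.mul_top (by simpa using hpos)] at h1
    simp at h1
  have h3 := (ENNReal.mul_le_mul_iff_left hV0 hVt).mp (h1.trans h2)
  exact (ENNReal.ofReal_le_ofReal_iff (Real.sqrt_nonneg _)).mp h3

lemma siegel_of_add {m d : ℕ} (hd : 0 < d) (A : Matrix (Fin m) (Fin (m + d)) ℤ)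
    (hA : (A * Aᵀ).det ≠ 0) :
    ∃ y : Fin d → Fin (m + d) → ℤ,
      LinearIndependent ℤ y ∧
      (∀ l, A.mulVec (y l) = 0) ∧
      ((∏ l, (Finset.univ.sup fun i => (y l i).natAbs) : ℕ) : ℝ) ≤
        Real.sqrt (((A * Aᵀ).det : ℝ)) /
          ((Finset.univ.gcd fun c : Fin m ↪ Fin (m + d) => (A.submatrix id ⇑c).det : ℤ) : ℝ) := by
  obtain ⟨N, hN, hlow⟩ := exists_unimodular_lowerTriangular A
  set B := N.submatrix id (Fin.natAdd m) with hBdef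
  set D := N.submatrix id (Fin.castAdd d) with hDdef
  have hAB : A * B = 0 := by
    ext i j
    have := hlow i (Fin.natAdd m j) (by simp; omega)
    simpa [mul_apply, hBdef] using this
  have hBinj : ∀ v, B *ᵥ v = 0 → v = 0 := by
    intro v hv
    -- `B v = N (0, v)`
    have e : N *ᵥ (Fin.append 0 v) = B *ᵥ v := by
      ext i
      simp [mulVec, dotProduct, Fin.sum_univ_add, hBdef]
    have h0 : Fin.append (0 : Fin m → ℤ) v = 0 := by
      refine eq_zero_of_mulVec_eq_zero hN.ne_zero (by rw [e, hv])
    ext j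
    have := congrFun h0 (Fin.natAdd m j)
    simpa using this
  obtain ⟨Z, hZ, hprod⟩ := exists_small_independent_columns hd B hBinj
  refine ⟨fun l => B *ᵥ Z l, ?_, fun l => ?_, ?_⟩
  · have hli : LinearIndependent ℤ Z := linearIndependent_rows_of_det_ne_zero hZ
    refine hli.map' B.mulVecLin ?_
    rw [LinearMap.ker_eq_bot']
    exact hBinj
  · rw [mulVec_mulVec, hAB, zero_mulVec]
  set g : ℤ := Finset.univ.gcd fun c : Fin m ↪ Fin (m + d) => (A.submatrix id ⇑c).det with hg
  have hgram := det_gram_ne_zero B hBinj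
  have hid : (A * Aᵀ).det = (A * D).det ^ 2 * (Bᵀ * B).det := by
    have := det_mul_transpose_mul_det_gram A N hN hAB
    refine mul_right_cancel₀ hgram (this.trans ?_)
    ring
  have hAD : (A * D).det ≠ 0 := by
    intro h; rw [h] at hid; simp at hid; exact hA hid
  have hdvd : g ∣ (A * D).det :=
    dvd_det_mul_of_dvd_minors A D g fun c => Finset.gcd_dvd (Finset.mem_univ c)
  have hg0 : 0 < g := by
    refine lt_of_le_of_ne ?_ fun h => hAD (zero_dvd_iff.mp (h ▸ hdvd))
    exact Int.nonneg_of_normalize_eq_self Finset.normalize_gcd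
  have hle : (g : ℝ) ≤ |((A * D).det : ℝ)| := by
    have : g ≤ |(A * D).det| := Int.le_of_dvd (abs_pos.mpr hAD) ((dvd_abs _ _).mpr hdvd)
    exact_mod_cast this
  have hg0' : (0 : ℝ) < g := by exact_mod_cast hg0
  rw [le_div_iff₀ hg0', hid]
  rw [Int.cast_mul, Int.cast_pow, Real.sqrt_mul (sq_nonneg _), Real.sqrt_sq_eq_abs, mul_comm]
  exact mul_le_mul hle hprod (Nat.cast_nonneg _) (abs_nonneg _)

end KernelLattice

/-- **Siegel's Lemma (Bombieri–Vaaler, 1983).** Fix an `m × n` integer matrix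
`A`, `m < n`, with `m` linearly independent rows.  The system `A y = 0` has
`n - m` linearly independent integral solutions `y_1, …, y_{n-m}` with
`∏ l ‖y_l‖_∞ ≤ g⁻¹ √(det (A Aᵀ))`, where `g` is the gcd of the determinants of
all `m × m` submatrices of `A`. -/
theorem siegel_lemma_bombieri_vaaler {m n : ℕ} (hmn : m < n)
    (A : Matrix (Fin m) (Fin n) ℤ)
    (hrows : LinearIndependent ℚ (fun i : Fin m => fun j : Fin n => (A i j : ℚ))) :
    ∃ y : Fin (n - m) → Fin n → ℤ,
      LinearIndependent ℤ y ∧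
      (∀ l, A.mulVec (y l) = 0) ∧
      ((∏ l, (Finset.univ.sup fun i => (y l i).natAbs) : ℕ) : ℝ) ≤
        Real.sqrt (((A * Aᵀ).det : ℝ)) /
          ((Finset.univ.gcd fun c : Fin m ↪ Fin n => (A.submatrix id ⇑c).det : ℤ) : ℝ) := by
  have hA : (A * Aᵀ).det ≠ 0 := by
    have h := det_gram_ne_zero Aᵀ fun v hv => ?_
    · rwa [transpose_transpose] at h
    · ext i
      have h0 : ∑ i, (v i : ℚ) • (fun j : Fin n => (A i j : ℚ)) = 0 := by
        ext j
        have := congrFun hv j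
        simp only [mulVec, dotProduct, transpose_apply, Pi.zero_apply] at this
        simp only [Finset.sum_apply, Pi.smul_apply, smul_eq_mul, Pi.zero_apply]
        rw [Finset.sum_congr rfl fun i _ => mul_comm (v i : ℚ) (A i j : ℚ)]
        exact_mod_cast this
      have := Fintype.linearIndependent_iff.mp hrows (fun i => (v i : ℚ)) h0 i
      exact_mod_cast this
  obtain ⟨d, rfl⟩ := Nat.exists_eq_add_of_lt hmn
  obtain ⟨k, hk, hk'⟩ : ∃ k, k = m + d + 1 - m ∧ k = d + 1 := ⟨d + 1, by omega, rfl⟩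
  rw [← hk, hk']
  exact siegel_of_add (d := d + 1) d.succ_pos A hA
end
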